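/- Suppose each receiver of a discrete memoryless interference channel has side information correlated with its own desired source: Receiver k observes V_k^n, k=1,2. If the pair (H(U1|V1), H(U2|V2)) lies in the interior of the capacity region C of the interference channel, then the sources U1 and U2 can be transmitted reliably to their respective receivers. Conversely, if (H(U1|V1), H(U2|V2)) is not in C, then the sources cannot be transmitted reliably. -/

import Mathlib

open Finset Real Filter
open scoped Classical

namespace Paper

/-- `p` is a probability mass function on the finite type `α`. -/
def IsPMF {α : Type*} [Fintype α] (p : α → ℝ) : Prop :=
  (∀ a, 0 ≤ p a) ∧ ∑ a, p a = 1

/-- `k` is a transition probability (channel) from `α` to the finite type `β`. -/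
def IsKernel {α β : Type*} [Fintype β] (k : α → β → ℝ) : Prop :=
  ∀ a, IsPMF (k a)

variable {Ω : Type*} [Fintype Ω]

/-- Probability that the random variable `X` takes the value `x`, under the weight `p`. -/
noncomputable def pr {α : Type*} (p : Ω → ℝ) (X : Ω → α) (x : α) : ℝ :=
  ∑ ω, if X ω = x then p ω else 0

/-- Shannon entropy (base 2) of the random variable `X` under `p`. -/
noncomputable def ent {α : Type*} [Fintype α] (p : Ω → ℝ) (X : Ω → α) : ℝ :=
  ∑ x, -(pr p X x * Real.logb 2 (pr p X x))

/-- Conditional entropy `H(X|Y) = H(X,Y) - H(Y)`. -/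
noncomputable def condEnt {α β : Type*} [Fintype α] [Fintype β]
    (p : Ω → ℝ) (X : Ω → α) (Y : Ω → β) : ℝ :=
  ent p (fun ω => (X ω, Y ω)) - ent p Y

/-- Mutual information `I(X;Y) = H(X) + H(Y) - H(X,Y)`. -/
noncomputable def mi {α β : Type*} [Fintype α] [Fintype β]
    (p : Ω → ℝ) (X : Ω → α) (Y : Ω → β) : ℝ :=
  ent p X + ent p Y - ent p (fun ω => (X ω, Y ω))

/-- Conditional mutual information `I(X;Y|Z) = H(X,Z) + H(Y,Z) - H(X,Y,Z) - H(Z)`. -/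
noncomputable def cmi {α β γ : Type*} [Fintype α] [Fintype β] [Fintype γ]
    (p : Ω → ℝ) (X : Ω → α) (Y : Ω → β) (Z : Ω → γ) : ℝ :=
  ent p (fun ω => (X ω, Z ω)) + ent p (fun ω => (Y ω, Z ω))
    - ent p (fun ω => (X ω, Y ω, Z ω)) - ent p Z

/-- The Markov chain `A → B → C`: `A` and `C` are conditionally independent given `B`. -/
def MarkovChain {α β γ : Type*} (p : Ω → ℝ) (A : Ω → α) (B : Ω → β) (C : Ω → γ) : Prop :=
  ∀ a b c, pr p (fun ω => (A ω, B ω, C ω)) (a, b, c) * pr p B b =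
    pr p (fun ω => (A ω, B ω)) (a, b) * pr p (fun ω => (B ω, C ω)) (b, c)

/-! ## Statement 0: source-channel separation with side information correlated
with the desired source. -/

section Stmt0

variable {U1 V1 U2 V2 X1 X2 Y1 Y2 : Type}
  [Fintype U1] [Fintype V1] [Fintype U2] [Fintype V2]
  [Fintype X1] [Fintype X2] [Fintype Y1] [Fintype Y2]

/-- Error probability of a length-`n` joint source-channel code, where Receiver `k`
has side information `V_k^n` correlated with its own desired source. -/
noncomputable def PerrOwn (ch : X1 × X2 → Y1 × Y2 → ℝ)
    (q1 : U1 × V1 → ℝ) (q2 : U2 × V2 → ℝ) (n : ℕ)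
    (f1 : (Fin n → U1) → Fin n → X1) (f2 : (Fin n → U2) → Fin n → X2)
    (g1 : (Fin n → Y1) → (Fin n → V1) → Fin n → U1)
    (g2 : (Fin n → Y2) → (Fin n → V2) → Fin n → U2) : ℝ :=
  ∑ u1 : Fin n → U1, ∑ v1 : Fin n → V1, ∑ u2 : Fin n → U2, ∑ v2 : Fin n → V2,
    ∑ y : Fin n → Y1 × Y2,
      (∏ i, q1 (u1 i, v1 i)) * (∏ i, q2 (u2 i, v2 i)) *
      (∏ i, ch (f1 u1 i, f2 u2 i) (y i)) *
      (if g1 (fun i => (y i).1) v1 = u1 ∧ g2 (fun i => (y i).2) v2 = u2 then 0 else 1)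

/-- The sources can be transmitted reliably (side information about the desired source). -/
def ReliableOwn (ch : X1 × X2 → Y1 × Y2 → ℝ)
    (q1 : U1 × V1 → ℝ) (q2 : U2 × V2 → ℝ) : Prop :=
  ∃ (f1 : ∀ n : ℕ, (Fin n → U1) → Fin n → X1)
    (f2 : ∀ n : ℕ, (Fin n → U2) → Fin n → X2)
    (g1 : ∀ n : ℕ, (Fin n → Y1) → (Fin n → V1) → Fin n → U1)
    (g2 : ∀ n : ℕ, (Fin n → Y2) → (Fin n → V2) → Fin n → U2),
    Tendsto (fun n => PerrOwn ch q1 q2 n (f1 n) (f2 n) (g1 n) (g2 n)) atTop (nhds 0)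

/-- Joint law of the `n`-letter inputs and outputs of the memoryless interference channel,
for independent input distributions `μ1, μ2`. -/
noncomputable def jointIC (ch : X1 × X2 → Y1 × Y2 → ℝ) (n : ℕ)
    (μ1 : (Fin n → X1) → ℝ) (μ2 : (Fin n → X2) → ℝ) :
    (Fin n → X1) × (Fin n → X2) × (Fin n → Y1 × Y2) → ℝ :=
  fun w => μ1 w.1 * μ2 w.2.1 * ∏ i, ch (w.1 i, w.2.1 i) (w.2.2 i)

/-- The `n`-letter region `E_n` of normalized mutual information pairs for
independent inputs. -/
def En (ch : X1 × X2 → Y1 × Y2 → ℝ) (n : ℕ) : Set (ℝ × ℝ) :=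
  { r | ∃ (μ1 : (Fin n → X1) → ℝ) (μ2 : (Fin n → X2) → ℝ),
      IsPMF μ1 ∧ IsPMF μ2 ∧
      r = ((1 / (n : ℝ)) * mi (jointIC ch n μ1 μ2) (fun w => w.1) (fun w => fun i => (w.2.2 i).1),
           (1 / (n : ℝ)) * mi (jointIC ch n μ1 μ2) (fun w => w.2.1) (fun w => fun i => (w.2.2 i).2)) }

/-- The capacity region of the interference channel: the closure of the union of the `E_n`. -/
noncomputable def capIC (ch : X1 × X2 → Y1 × Y2 → ℝ) : Set (ℝ × ℝ) :=
  closure (⋃ n : ℕ, En ch (n + 1))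

end Stmt0

section Helpers

/-- Abbreviation for the base-2 logarithm. -/
noncomputable abbrev lg (x : ℝ) : ℝ := Real.logb 2 x

lemma lg_mul {x y : ℝ} (hx : x ≠ 0) (hy : y ≠ 0) : lg (x * y) = lg x + lg y :=
  Real.logb_mul hx hy

lemma lg_prod {ι : Type*} [Fintype ι] (f : ι → ℝ) (h : ∀ i, f i ≠ 0) :
    lg (∏ i, f i) = ∑ i, lg (f i) := by
  have : ∀ s : Finset ι, lg (∏ i ∈ s, f i) = ∑ i ∈ s, lg (f i) := by
    intro s
    induction s using Finset.induction with
    | empty => simp [lg]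
    | insert a s ha ih =>
      rw [Finset.prod_insert ha, Finset.sum_insert ha,
        lg_mul (h a) (Finset.prod_ne_zero_iff.2 fun i _ => h i), ih]
  exact this univ

/-- Gibbs' inequality. -/
lemma gibbs {Ω : Type*} [Fintype Ω] (p s : Ω → ℝ) (hp : ∀ ω, 0 ≤ p ω)
    (hs : ∀ ω, 0 ≤ s ω) (hps : ∀ ω, 0 < p ω → 0 < s ω) (h : ∑ ω, s ω ≤ ∑ ω, p ω) :
    ∑ ω, p ω * (lg (s ω) - lg (p ω)) ≤ 0 := by
  have hl : 0 < Real.log 2 := Real.log_pos (by norm_num)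
  have key : ∀ ω, p ω * (lg (s ω) - lg (p ω)) ≤ (s ω - p ω) / Real.log 2 := by
    intro ω
    rcases (hp ω).eq_or_lt with h0 | h0
    · rw [← h0]; simp; exact div_nonneg (hs ω) hl.le
    · have h1 := hps ω h0
      have h2 := Real.log_le_sub_one_of_pos (div_pos h1 h0)
      rw [Real.log_div h1.ne' h0.ne'] at h2
      simp only [lg, Real.logb, ← sub_div]
      rw [← mul_div_assoc]
      gcongr
      calc p ω * (Real.log (s ω) - Real.log (p ω)) ≤ p ω * (s ω / p ω - 1) := by gcongr
        _ = s ω - p ω := by field_simp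
  calc _ ≤ ∑ ω, (s ω - p ω) / Real.log 2 := Finset.sum_le_sum fun ω _ => key ω
    _ = (∑ ω, s ω - ∑ ω, p ω) / Real.log 2 := by rw [← Finset.sum_div, Finset.sum_sub_distrib]
    _ ≤ 0 := div_nonpos_of_nonpos_of_nonneg (by linarith) hl.le

/-- Expectation of a product-form function. -/
lemma sum_pi_prod {ι α : Type*} [Fintype ι] [DecidableEq ι] [Fintype α] (f : ι → α → ℝ) :
    ∑ a : ι → α, ∏ i, f i (a i) = ∏ i, ∑ x, f i x := (Fintype.prod_sum f).symm

lemma isPMF_pi {ι α : Type*} [Fintype ι] [DecidableEq ι] [Fintype α] (f : ι → α → ℝ)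
    (hf : ∀ i, IsPMF (f i)) : IsPMF (fun a : ι → α => ∏ i, f i (a i)) := by
  refine ⟨fun a => Finset.prod_nonneg fun i _ => (hf i).1 _, ?_⟩
  rw [sum_pi_prod]
  exact Finset.prod_eq_one fun i _ => (hf i).2

lemma exp_one {ι α : Type*} [Fintype ι] [DecidableEq ι] [Fintype α] (p : ι → α → ℝ)
    (hp : ∀ i, IsPMF (p i)) (i : ι) (f : α → ℝ) :
    ∑ a : ι → α, (∏ j, p j (a j)) * f (a i) = ∑ x, p i x * f x := by
  have : ∀ a : ι → α, (∏ j, p j (a j)) * f (a i)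
      = ∏ j, (p j (a j) * (if j = i then f (a j) else 1)) := by
    intro a
    rw [Finset.prod_mul_distrib, Finset.prod_ite_eq' univ i (fun j => f (a j))]
    simp
  simp_rw [this]
  rw [sum_pi_prod (fun j x => p j x * (if j = i then f x else 1))]
  rw [Finset.prod_eq_single i]
  · simp
  · intro j _ hj
    simp [hj, (hp j).2]
  · simp

lemma exp_two {ι α : Type*} [Fintype ι] [DecidableEq ι] [Fintype α] (p : ι → α → ℝ)
    (hp : ∀ i, IsPMF (p i)) (i i' : ι) (hii : i ≠ i') (f g : α → ℝ) :
    ∑ a : ι → α, (∏ j, p j (a j)) * (f (a i) * g (a i')) =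
      (∑ x, p i x * f x) * (∑ x, p i' x * g x) := by
  have : ∀ a : ι → α, (∏ j, p j (a j)) * (f (a i) * g (a i'))
      = ∏ j, (p j (a j) * ((if j = i then f (a j) else 1) * (if j = i' then g (a j) else 1))) := by
    intro a
    rw [Finset.prod_mul_distrib, Finset.prod_mul_distrib,
      Finset.prod_ite_eq' univ i (fun j => f (a j)), Finset.prod_ite_eq' univ i' (fun j => g (a j))]
    simp
  simp_rw [this]
  rw [sum_pi_prod (fun j x => p j x * ((if j = i then f x else 1) * (if j = i' then g x else 1)))]
  rw [Finset.prod_eq_mul i i' hii]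
  · simp [hii, hii.symm]
  · intro j _ hj
    simp [hj.1, hj.2, (hp j).2]
  · simp
  · simp

lemma exp_two' {ι α : Type*} [Fintype ι] [DecidableEq ι] [Fintype α] (p : ι → α → ℝ)
    (hp : ∀ i, IsPMF (p i)) (i i' : ι) (hii : i ≠ i') (F : α → α → ℝ) :
    ∑ a : ι → α, (∏ j, p j (a j)) * F (a i) (a i') =
      ∑ x, ∑ y, p i x * p i' y * F x y := by
  have : ∀ a : ι → α, (∏ j, p j (a j)) * F (a i) (a i')
      = ∑ x, ∑ y, F x y * ((∏ j, p j (a j)) *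
        ((if a i = x then (1:ℝ) else 0) * (if a i' = y then (1:ℝ) else 0))) := by
    intro a
    rw [Finset.sum_eq_single (a i), Finset.sum_eq_single (a i')]
    · simp; ring
    · intro b _ hb; simp [hb.symm]
    · simp
    · intro b _ hb; simp [hb.symm]
    · simp
  simp_rw [this]
  rw [Finset.sum_comm]
  refine Finset.sum_congr rfl fun x _ => ?_
  rw [Finset.sum_comm]
  refine Finset.sum_congr rfl fun y _ => ?_
  rw [← Finset.mul_sum, exp_two p hp i i' hii (fun t => if t = x then (1:ℝ) else 0)
    (fun t => if t = y then (1:ℝ) else 0)]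
  simp
  ring

lemma exp_sum {ι α : Type*} [Fintype ι] [DecidableEq ι] [Fintype α] (p : ι → α → ℝ)
    (hp : ∀ i, IsPMF (p i)) (f : ι → α → ℝ) :
    ∑ a : ι → α, (∏ j, p j (a j)) * (∑ i, f i (a i)) = ∑ i, ∑ x, p i x * f i x := by
  simp_rw [Finset.mul_sum]
  rw [Finset.sum_comm]
  exact Finset.sum_congr rfl fun i _ => exp_one p hp i (f i)

/-- Second moment of a centered i.i.d. sum. -/
lemma second_moment {α : Type*} [Fintype α] (p : α → ℝ) (hp : IsPMF p) (f : α → ℝ)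
    (hf : ∑ x, p x * f x = 0) (N : ℕ) :
    ∑ a : Fin N → α, (∏ j, p (a j)) * (∑ i, f (a i)) ^ 2 = N * ∑ x, p x * f x ^ 2 := by
  have : ∀ a : Fin N → α, (∏ j, p (a j)) * (∑ i, f (a i)) ^ 2
      = ∑ i, ∑ i', (∏ j, p (a j)) * (f (a i) * f (a i')) := by
    intro a
    rw [sq, Finset.sum_mul_sum, Finset.mul_sum]
    exact Finset.sum_congr rfl fun i _ => by rw [Finset.mul_sum]
  simp_rw [this]
  rw [Finset.sum_comm]
  have h2 : ∀ i : Fin N, ∑ a : Fin N → α, ∑ i', (∏ j, p (a j)) * (f (a i) * f (a i'))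
      = ∑ x, p x * f x ^ 2 := by
    intro i
    rw [Finset.sum_comm, Finset.sum_eq_single i]
    · have := exp_one (fun _ : Fin N => p) (fun _ => hp) i (fun x => f x * f x)
      rw [this]
      exact Finset.sum_congr rfl fun x _ => by ring
    · intro i' _ hi
      have := exp_two (fun _ : Fin N => p) (fun _ => hp) i i' hi.symm f f
      rw [this, hf, zero_mul]
    · simp
  simp_rw [h2]
  simp

/-- Weak law of large numbers (lower tail) for finite alphabets. -/
lemma wlln {α : Type*} [Fintype α] (p : α → ℝ) (hp : IsPMF p) (f : α → ℝ)
    (ε η : ℝ) (hε : 0 < ε) (hη : 0 < η) : ∃ N0 : ℕ, ∀ N ≥ N0,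
    ∑ a : Fin N → α, (∏ j, p (a j)) *
      (if ∑ i, f (a i) ≤ N * ((∑ x, p x * f x) - ε) then 1 else 0) ≤ η := by
  set m := ∑ x, p x * f x with hm
  set g : α → ℝ := fun x => f x - m with hg
  have hg0 : ∑ x, p x * g x = 0 := by
    simp only [hg, mul_sub, Finset.sum_sub_distrib, ← Finset.sum_mul, hp.2, ← hm]; ring
  set v := ∑ x, p x * g x ^ 2 with hv
  obtain ⟨N0, hN0⟩ := exists_nat_gt (v / (ε ^ 2 * η))
  refine ⟨N0 + 1, fun N hN => ?_⟩
  have hNpos : (0:ℝ) < N := by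
    have : 0 < N := by omega
    exact_mod_cast this
  have hNlt : v / (ε ^ 2 * η) < N := hN0.trans (by exact_mod_cast (by omega : N0 < N))
  have hb : ∀ a : Fin N → α, (∏ j, p (a j)) *
      (if ∑ i, f (a i) ≤ N * (m - ε) then (1:ℝ) else 0) ≤
      (∏ j, p (a j)) * (∑ i, g (a i)) ^ 2 / (N * ε) ^ 2 := by
    intro a
    rw [mul_div_assoc]
    refine mul_le_mul_of_nonneg_left ?_ (Finset.prod_nonneg fun i _ => hp.1 _)
    split_ifs with h
    · rw [le_div_iff₀ (by positivity), one_mul]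
      have : ∑ i, g (a i) ≤ -(N * ε) := by
        simp only [hg, Finset.sum_sub_distrib, Finset.sum_const, Finset.card_univ,
          Fintype.card_fin, nsmul_eq_mul]
        linarith
      have h0 : 0 < N * ε := by positivity
      nlinarith
    · positivity
  calc _ ≤ ∑ a : Fin N → α, (∏ j, p (a j)) * (∑ i, g (a i)) ^ 2 / (N * ε) ^ 2 :=
        Finset.sum_le_sum fun a _ => hb a
    _ = N * v / (N * ε) ^ 2 := by rw [← Finset.sum_div, second_moment p hp g hg0 N]
    _ ≤ η := by
      rw [div_le_iff₀ (by positivity)]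
      rw [div_lt_iff₀ (by positivity)] at hNlt
      nlinarith

end Helpers

section Helpers2

lemma sum_pr_mul {Ω α : Type*} [Fintype Ω] [Fintype α] (p : Ω → ℝ) (X : Ω → α) (L : α → ℝ) :
    ∑ x, pr p X x * L x = ∑ ω, p ω * L (X ω) := by
  simp only [pr, Finset.sum_mul]
  rw [Finset.sum_comm]
  refine Finset.sum_congr rfl fun ω _ => ?_
  rw [Finset.sum_eq_single (X ω)]
  · simp
  · intro b _ hb; simp [hb.symm]
  · simp

lemma ent_eq {Ω α : Type*} [Fintype Ω] [Fintype α] (p : Ω → ℝ) (X : Ω → α) :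
    ent p X = -∑ ω, p ω * lg (pr p X (X ω)) := by
  rw [← sum_pr_mul p X (fun x => lg (pr p X x))]
  simp [ent, lg]

/-- Conditional entropy of a joint mass function on a product. -/
noncomputable def HC {A B : Type*} [Fintype A] [Fintype B] (Q : A × B → ℝ) : ℝ :=
  -∑ w, Q w * (lg (Q w) - lg (∑ a, Q (a, w.2)))

lemma pr_snd {A B : Type*} [Fintype A] [Fintype B] (Q : A × B → ℝ) (b : B) :
    pr Q Prod.snd b = ∑ a, Q (a, b) := by
  simp only [pr, Fintype.sum_prod_type]
  refine Finset.sum_congr rfl fun a _ => ?_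
  simp

lemma condEnt_eq {A B : Type*} [Fintype A] [Fintype B] (Q : A × B → ℝ) :
    condEnt Q Prod.fst Prod.snd = HC Q := by
  rw [condEnt, ent_eq, ent_eq, HC]
  have h1 : ∀ w : A × B, pr Q (fun ω : A × B => (ω.1, ω.2)) (w.1, w.2) = Q w := by
    intro w; simp [pr]
  simp only [h1, pr_snd, mul_sub, Finset.sum_sub_distrib]
  ring

lemma HC_nonneg {A B : Type*} [Fintype A] [Fintype B] (Q : A × B → ℝ) (hQ : IsPMF Q) :
    0 ≤ HC Q := by
  rw [HC, ← Finset.sum_neg_distrib]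
  refine Finset.sum_nonneg fun w _ => ?_
  rcases (hQ.1 w).eq_or_lt with h | h
  · rw [← h]; simp
  · have : Q w ≤ ∑ a, Q (a, w.2) :=
      Finset.single_le_sum (f := fun a => Q (a, w.2)) (fun a _ => hQ.1 _) (Finset.mem_univ w.1)
    have := Real.logb_le_logb_of_le (b := 2) (by norm_num) h this
    have h3 : 0 ≤ Q w * (lg (∑ a, Q (a, w.2)) - lg (Q w)) :=
      mul_nonneg h.le (by simp only [lg]; linarith)
    linarith

/-- Mutual information of input law `M` through channel `K`. -/
noncomputable def MI {A Z : Type*} [Fintype A] [Fintype Z] (M : A → ℝ) (K : A → Z → ℝ) : ℝ :=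
  ∑ a, ∑ z, M a * K a z * (lg (K a z) - lg (∑ aa, M aa * K aa z))

/-- Effective channel from the first input to the output `o y`, averaged over the second input. -/
noncomputable def KC {A B Y Z : Type*} [Fintype B] [Fintype Y]
    (M : B → ℝ) (W : A → B → Y → ℝ) (o : Y → Z) (a : A) (z : Z) : ℝ :=
  ∑ b, M b * ∑ y, if o y = z then W a b y else 0

lemma KC_nonneg {A B Y Z : Type*} [Fintype B] [Fintype Y]
    (M : B → ℝ) (W : A → B → Y → ℝ) (o : Y → Z) (hM : IsPMF M) (hW : ∀ a b, IsPMF (W a b))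
    (a : A) (z : Z) : 0 ≤ KC M W o a z := by
  refine Finset.sum_nonneg fun b _ => mul_nonneg (hM.1 b) (Finset.sum_nonneg fun y _ => ?_)
  split_ifs
  · exact (hW a b).1 y
  · exact le_rfl

/-- Sums against the effective channel. -/
lemma KC_sum {A B Y Z : Type*} [Fintype B] [Fintype Y] [Fintype Z]
    (M : B → ℝ) (W : A → B → Y → ℝ) (o : Y → Z) (a : A) (F : Z → ℝ) :
    ∑ z, KC M W o a z * F z = ∑ b, M b * ∑ y, W a b y * F (o y) := by
  simp only [KC, Finset.sum_mul]
  rw [Finset.sum_comm]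
  refine Finset.sum_congr rfl fun b _ => ?_
  have := sum_pr_mul (W a b) o F
  simp only [pr] at this
  rw [← this, Finset.mul_sum]
  exact Finset.sum_congr rfl fun z _ => by ring

lemma KC_pmf {A B Y Z : Type*} [Fintype B] [Fintype Y] [Fintype Z]
    (M : B → ℝ) (W : A → B → Y → ℝ) (o : Y → Z) (hM : IsPMF M) (hW : ∀ a b, IsPMF (W a b))
    (a : A) : IsPMF (KC M W o a) := by
  refine ⟨KC_nonneg M W o hM hW a, ?_⟩
  have := KC_sum M W o a (fun _ => 1)
  simpa [(hW _ _).2, hM.2] using this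

lemma mi_eq {A B Y Z : Type*} [Fintype A] [Fintype B] [Fintype Y] [Fintype Z]
    (p : A × B × Y → ℝ) (hp : ∀ w, 0 ≤ p w) {C : Type*} [Fintype C] (X : A × B × Y → C) (o : A × B × Y → Z)
    (M : C → ℝ) (K : C → Z → ℝ) (hK : ∀ c, IsPMF (K c)) 
    (hj : ∀ c z, pr p (fun w => (X w, o w)) (c, z) = M c * K c z) :
    mi p X o = MI M K := by
  have hX : ∀ c, pr p X c = M c := by
    intro c
    have : pr p X c = ∑ z, pr p (fun w => (X w, o w)) (c, z) := by
      simp only [pr]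
      rw [Finset.sum_comm]
      refine Finset.sum_congr rfl fun w _ => ?_
      by_cases h : X w = c <;> simp [h]
    rw [this]
    simp_rw [hj]
    rw [← Finset.mul_sum, (hK c).2, mul_one]
  have hZ : ∀ z, pr p o z = ∑ c, M c * K c z := by
    intro z
    simp_rw [← hj]
    simp only [pr]
    rw [Finset.sum_comm]
    refine Finset.sum_congr rfl fun w _ => ?_
    by_cases h : o w = z <;> simp [h]
  have hM0 : ∀ c, 0 ≤ M c := by
    intro c; rw [← hX]
    refine Finset.sum_nonneg fun w _ => ?_
    split_ifs
    · exact hp w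
    · exact le_rfl
  rw [mi, ent_eq, ent_eq, ent_eq]
  have h1 : MI M K = ∑ w : C × Z, pr p (fun w => (X w, o w)) w *
      (lg (K w.1 w.2) - lg (∑ a', M a' * K a' w.2)) := by
    rw [MI, Fintype.sum_prod_type]
    simp_rw [hj]
  have h2 : ∀ w : C × Z, pr p (fun w => (X w, o w)) w *
      (lg (K w.1 w.2) - lg (∑ a', M a' * K a' w.2)) = pr p (fun w => (X w, o w)) w *
      (lg (pr p (fun w => (X w, o w)) w) - lg (pr p X w.1) - lg (pr p o w.2)) := by
    rintro ⟨c, z⟩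
    simp only [hj, hX, hZ]
    by_cases h : M c * K c z = 0
    · rw [h]; simp
    · rw [lg_mul (left_ne_zero_of_mul h) (right_ne_zero_of_mul h)]; ring
  rw [h1]
  simp_rw [h2]
  rw [sum_pr_mul p (fun w => (X w, o w)) (fun w => lg (pr p (fun w => (X w, o w)) w) - lg (pr p X w.1) - lg (pr p o w.2))]
  simp only [mul_sub, Finset.sum_sub_distrib]
  ring

lemma mi_left {A B Y Z : Type*} [Fintype A] [Fintype B] [Fintype Y] [Fintype Z]
    (M1 : A → ℝ) (M2 : B → ℝ) (W : A → B → Y → ℝ) (o : Y → Z) (h1 : IsPMF M1) (h2 : IsPMF M2)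
    (hW : ∀ a b, IsPMF (W a b)) :
    mi (fun w : A × B × Y => M1 w.1 * M2 w.2.1 * W w.1 w.2.1 w.2.2) (fun w => w.1)
      (fun w => o w.2.2) = MI M1 (KC M2 W o) := by
  refine mi_eq _ (fun w => mul_nonneg (mul_nonneg (h1.1 _) (h2.1 _)) ((hW _ _).1 _)) _ _ _ _
    (KC_pmf M2 W o h2 hW) ?_
  intro c z
  simp only [pr, KC, Fintype.sum_prod_type, Prod.mk.injEq]
  rw [Finset.sum_eq_single c]
  · rw [Finset.mul_sum]
    refine Finset.sum_congr rfl fun b _ => ?_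
    rw [← mul_assoc, Finset.mul_sum]
    refine Finset.sum_congr rfl fun y _ => ?_
    simp
  · intro b _ hb; simp [hb]
  · simp

lemma mi_right {A B Y Z : Type*} [Fintype A] [Fintype B] [Fintype Y] [Fintype Z]
    (M1 : A → ℝ) (M2 : B → ℝ) (W : A → B → Y → ℝ) (o : Y → Z) (h1 : IsPMF M1) (h2 : IsPMF M2)
    (hW : ∀ a b, IsPMF (W a b)) :
    mi (fun w : A × B × Y => M1 w.1 * M2 w.2.1 * W w.1 w.2.1 w.2.2) (fun w => w.2.1)
      (fun w => o w.2.2) = MI M2 (KC M1 (fun b a y => W a b y) o) := by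
  refine mi_eq _ (fun w => mul_nonneg (mul_nonneg (h1.1 _) (h2.1 _)) ((hW _ _).1 _)) _ _ _ _
    (KC_pmf M1 _ o h1 (fun b a => hW a b)) ?_
  intro c z
  simp only [pr, KC, Fintype.sum_prod_type, Prod.mk.injEq]
  rw [Finset.mul_sum]
  refine Finset.sum_congr rfl fun a _ => ?_
  rw [Finset.sum_eq_single c]
  · rw [← mul_assoc, Finset.mul_sum]
    refine Finset.sum_congr rfl fun y _ => ?_
    simp only [true_and]
    split_ifs <;> ring
  · intro b _ hb; simp [hb]
  · simp

/-- Memoryless extension of a two-input channel. -/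
noncomputable def WP {ι A B Y : Type*} [Fintype ι] (W : A → B → Y → ℝ)
    (x : ι → A) (x' : ι → B) (y : ι → Y) : ℝ := ∏ i, W (x i) (x' i) (y i)

lemma WP_pmf {ι A B Y : Type*} [Fintype ι] [DecidableEq ι] [Fintype Y] (W : A → B → Y → ℝ)
    (hW : ∀ a b, IsPMF (W a b)) (x : ι → A) (x' : ι → B) : IsPMF (WP W x x') :=
  isPMF_pi (fun i => W (x i) (x' i)) (fun i => hW _ _)

lemma KC_prod {ι A B Y Z : Type*} [Fintype ι] [DecidableEq ι] [Fintype B] [Fintype Y]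
    (M : ι → B → ℝ) (W : A → B → Y → ℝ) (o : Y → Z) (a : ι → A) (z : ι → Z) :
    KC (fun b : ι → B => ∏ i, M i (b i)) (WP W) (fun y i => o (y i)) a z
      = ∏ i, KC (M i) W o (a i) (z i) := by
  simp only [KC, WP]
  rw [← sum_pi_prod (fun i b => M i b * ∑ y, if o y = z i then W (a i) b y else 0)]
  refine Finset.sum_congr rfl fun b _ => ?_
  rw [Finset.prod_mul_distrib, ← sum_pi_prod (fun i y => if o y = z i then W (a i) (b i) y else 0)]
  congr 1
  refine Finset.sum_congr rfl fun y _ => ?_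
  rw [Fintype.prod_ite_zero]
  simp only [funext_iff]

lemma sum_pair_pi {ι A Z : Type*} [Fintype ι] [DecidableEq ι] [Fintype A] [Fintype Z]
    (F : (ι → A × Z) → ℝ) :
    ∑ w : ι → A × Z, F w = ∑ a : ι → A, ∑ z : ι → Z, F (fun i => (a i, z i)) := by
  rw [← Fintype.sum_prod_type']
  exact Fintype.sum_equiv (Equiv.arrowProdEquivProdArrow ι (fun _ => A) (fun _ => Z)) _ _
    (fun w => rfl)

/-- Additivity of mutual information over independent uses. -/
lemma MI_prod {ι A Z : Type*} [Fintype ι] [DecidableEq ι] [Fintype A] [Fintype Z]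
    (M : ι → A → ℝ) (K : ι → A → Z → ℝ) (hM : ∀ i, IsPMF (M i)) (hK : ∀ i a, IsPMF (K i a)) :
    MI (fun a : ι → A => ∏ i, M i (a i)) (fun a (z : ι → Z) => ∏ i, K i (a i) (z i))
      = ∑ i, MI (M i) (K i) := by
  have hP : ∀ z : ι → Z, ∑ a' : ι → A, (∏ i, M i (a' i)) * ∏ i, K i (a' i) (z i)
      = ∏ i, ∑ x, M i x * K i x (z i) := by
    intro z
    rw [← sum_pi_prod (fun i x => M i x * K i x (z i))]
    simp_rw [Finset.prod_mul_distrib]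
  have hpmf : ∀ i, IsPMF (fun w : A × Z => M i w.1 * K i w.1 w.2) := by
    intro i
    refine ⟨fun w => mul_nonneg ((hM i).1 _) ((hK i _).1 _), ?_⟩
    rw [Fintype.sum_prod_type]
    simp only [← Finset.mul_sum, (hK i _).2, mul_one, (hM i).2]
  have := exp_sum (fun i (w : A × Z) => M i w.1 * K i w.1 w.2) hpmf
    (fun i w => lg (K i w.1 w.2) - lg (∑ x, M i x * K i x w.2))
  rw [sum_pair_pi] at this
  simp only [MI, hP]
  simp only [Fintype.sum_prod_type] at this
  rw [← this]
  refine Finset.sum_congr rfl fun a _ => Finset.sum_congr rfl fun z _ => ?_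
  rw [← Finset.prod_mul_distrib]
  by_cases h : ∏ i, M i (a i) * K i (a i) (z i) = 0
  · rw [h]; simp
  · congr 1
    rw [← ne_eq, Finset.prod_ne_zero_iff] at h
    have h1 : ∀ i, K i (a i) (z i) ≠ 0 := fun i => right_ne_zero_of_mul (h i (Finset.mem_univ i))
    have h2 : ∀ i, ∑ x, M i x * K i x (z i) ≠ 0 := by
      intro i
      have h0 : 0 < M i (a i) * K i (a i) (z i) :=
        lt_of_le_of_ne ((hpmf i).1 (a i, z i)) (h i (Finset.mem_univ i)).symm
      have : M i (a i) * K i (a i) (z i) ≤ ∑ x, M i x * K i x (z i) :=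
        Finset.single_le_sum (f := fun x => M i x * K i x (z i))
          (fun x _ => (hpmf i).1 (x, z i)) (Finset.mem_univ (a i))
      linarith
    rw [lg_prod _ h1, lg_prod _ h2, Finset.sum_sub_distrib]

lemma HC_prod {ι A Z : Type*} [Fintype ι] [DecidableEq ι] [Fintype A] [Fintype Z]
    (q : A × Z → ℝ) (hq : IsPMF q) :
    HC (fun w : (ι → A) × (ι → Z) => ∏ i, q (w.1 i, w.2 i)) = Fintype.card ι * HC q := by
  have hP : ∀ z : ι → Z, ∑ a' : ι → A, (∏ i, q (a' i, z i)) = ∏ i, ∑ x, q (x, z i) := by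
    intro z
    rw [← sum_pi_prod (fun i x => q (x, z i))]
  have := exp_sum (fun (_ : ι) (w : A × Z) => q w) (fun _ => hq)
    (fun i w => lg (q w) - lg (∑ x, q (x, w.2)))
  rw [sum_pair_pi] at this
  have h3 : ∑ i : ι, ∑ w : A × Z, q w * (lg (q w) - lg (∑ x, q (x, w.2)))
    = - (Fintype.card ι * HC q) := by simp [HC]
  rw [h3] at this
  rw [HC, neg_eq_iff_eq_neg, ← this, Fintype.sum_prod_type]
  simp only [hP]
  refine Finset.sum_congr rfl fun a _ => Finset.sum_congr rfl fun z _ => ?_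
  by_cases h : ∏ i, q (a i, z i) = 0
  · rw [h]; simp
  · congr 1
    rw [← ne_eq, Finset.prod_ne_zero_iff] at h
    have h1 : ∀ i, q (a i, z i) ≠ 0 := fun i => (h i (Finset.mem_univ i))
    have h2 : ∀ i, ∑ x, q (x, z i) ≠ 0 := by
      intro i
      have h0 : 0 < q (a i, z i) := lt_of_le_of_ne (hq.1 _) (h1 i).symm
      have : q (a i, z i) ≤ ∑ x, q (x, z i) :=
        Finset.single_le_sum (f := fun x => q (x, z i))
          (fun x _ => hq.1 _) (Finset.mem_univ (a i))
      linarith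
    rw [lg_prod _ h1, lg_prod _ h2, Finset.sum_sub_distrib]

end Helpers2

section Helpers3

lemma MI_nonneg {A Z : Type*} [Fintype A] [Fintype Z] (M : A → ℝ) (K : A → Z → ℝ)
    (hM : IsPMF M) (hK : ∀ a, IsPMF (K a)) : 0 ≤ MI M K := by
  have hP : ∀ z, 0 ≤ ∑ a', M a' * K a' z := fun z =>
    Finset.sum_nonneg fun a _ => mul_nonneg (hM.1 a) ((hK a).1 z)
  have hle : ∀ a z, M a * K a z ≤ ∑ a', M a' * K a' z := fun a z =>
    Finset.single_le_sum (f := fun a => M a * K a z)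
      (fun a _ => mul_nonneg (hM.1 a) ((hK a).1 z)) (Finset.mem_univ a)
  have hPs : ∑ z, ∑ a', M a' * K a' z = 1 := by
    rw [Finset.sum_comm]
    simp only [← Finset.mul_sum, (hK _).2, mul_one, hM.2]
  have key := gibbs (fun w : A × Z => M w.1 * K w.1 w.2)
    (fun w => M w.1 * ∑ a', M a' * K a' w.2)
    (fun w => mul_nonneg (hM.1 _) ((hK _).1 _)) (fun w => mul_nonneg (hM.1 _) (hP _)) ?_ ?_
  · rw [Fintype.sum_prod_type] at key
    have : MI M K = -∑ x, ∑ y, M x * K x y * (lg (M x * ∑ a', M a' * K a' y) - lg (M x * K x y)) := by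
      rw [MI, ← Finset.sum_neg_distrib]
      refine Finset.sum_congr rfl fun a _ => ?_
      rw [← Finset.sum_neg_distrib]
      refine Finset.sum_congr rfl fun z _ => ?_
      by_cases h : M a * K a z = 0
      · rw [h]; simp
      · have h0 : 0 < M a * K a z := lt_of_le_of_ne (mul_nonneg (hM.1 a) ((hK a).1 z)) (Ne.symm h)
        rw [lg_mul (left_ne_zero_of_mul h) (h0.trans_le (hle a z)).ne',
          lg_mul (left_ne_zero_of_mul h) (right_ne_zero_of_mul h)]
        ring
    rw [this]
    simp only at key
    linarith
  · rintro ⟨a, z⟩ h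
    have h0 : 0 < M a := lt_of_le_of_ne (hM.1 a) (left_ne_zero_of_mul h.ne').symm
    exact mul_pos h0 (h.trans_le (hle a z))
  · simp only [Fintype.sum_prod_type, ← Finset.mul_sum, (hK _).2, hPs, hM.2, mul_one, le_refl]

/-- Mutual information is convex in the channel. -/
lemma MI_convex {A C Z : Type*} [Fintype A] [Fintype C] [Fintype Z] (M : A → ℝ)
    (μ : C → ℝ) (k : C → A → Z → ℝ)
    (hM : IsPMF M) (hμ : IsPMF μ) (hk : ∀ c a, IsPMF (k c a)) :
    MI M (fun a z => ∑ c, μ c * k c a z) ≤ ∑ c, μ c * MI M (k c) := by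
  set K : A → Z → ℝ := fun a z => ∑ c, μ c * k c a z with hK
  set P : Z → ℝ := fun z => ∑ a, M a * K a z with hP
  set Pc : C → Z → ℝ := fun c z => ∑ a, M a * k c a z with hPc
  have n1 : ∀ c a z, 0 ≤ μ c * k c a z := fun c a z => mul_nonneg (hμ.1 c) ((hk c a).1 z)
  have nK : ∀ a z, 0 ≤ K a z := fun a z => Finset.sum_nonneg fun c _ => n1 c a z
  have nPc : ∀ c z, 0 ≤ Pc c z := fun c z =>
    Finset.sum_nonneg fun a _ => mul_nonneg (hM.1 a) ((hk c a).1 z)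
  have nP : ∀ z, 0 ≤ P z := fun z => Finset.sum_nonneg fun a _ => mul_nonneg (hM.1 a) (nK a z)
  have hPcs : ∀ c, ∑ z, Pc c z = 1 := by
    intro c
    simp only [hPc]
    rw [Finset.sum_comm]
    simp only [← Finset.mul_sum, (hk _ _).2, mul_one, hM.2]
  have hpos : ∀ c a z, 0 < M a * (μ c * k c a z) →
      0 < M a ∧ 0 < μ c ∧ 0 < k c a z ∧ 0 < K a z ∧ 0 < P z ∧ 0 < Pc c z := by
    intro c a z h
    have a1 : 0 < M a := lt_of_le_of_ne (hM.1 a) (left_ne_zero_of_mul h.ne').symm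
    have a2 : 0 < μ c := lt_of_le_of_ne (hμ.1 c)
      (left_ne_zero_of_mul (right_ne_zero_of_mul h.ne')).symm
    have a3 : 0 < k c a z := lt_of_le_of_ne ((hk c a).1 z)
      (right_ne_zero_of_mul (right_ne_zero_of_mul h.ne')).symm
    have a4 : 0 < K a z := lt_of_lt_of_le (mul_pos a2 a3)
      (Finset.single_le_sum (f := fun c => μ c * k c a z) (fun c _ => n1 c a z)
        (Finset.mem_univ c))
    have a5 : 0 < P z := lt_of_lt_of_le (mul_pos a1 a4)
      (Finset.single_le_sum (f := fun a => M a * K a z)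
        (fun a _ => mul_nonneg (hM.1 a) (nK a z)) (Finset.mem_univ a))
    have a6 : 0 < Pc c z := lt_of_lt_of_le (mul_pos a1 a3)
      (Finset.single_le_sum (f := fun a => M a * k c a z)
        (fun a _ => mul_nonneg (hM.1 a) ((hk c a).1 z)) (Finset.mem_univ a))
    exact ⟨a1, a2, a3, a4, a5, a6⟩
  have key := gibbs (fun w : A × Z × C => M w.1 * (μ w.2.2 * k w.2.2 w.1 w.2.1))
    (fun w => μ w.2.2 * Pc w.2.2 w.2.1 * (M w.1 * K w.1 w.2.1 / P w.2.1))
    (fun w => mul_nonneg (hM.1 _) (n1 _ _ _))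
    (fun w => mul_nonneg (mul_nonneg (hμ.1 _) (nPc _ _))
      (div_nonneg (mul_nonneg (hM.1 _) (nK _ _)) (nP _))) ?_ ?_
  · simp only [Fintype.sum_prod_type] at key
    have e1 : MI M K = ∑ a, ∑ z, ∑ c, M a * (μ c * k c a z) * (lg (K a z) - lg (P z)) := by
      rw [MI]
      refine Finset.sum_congr rfl fun a _ => Finset.sum_congr rfl fun z _ => ?_
      rw [← Finset.sum_mul, ← Finset.mul_sum]
    have e2 : ∑ c, μ c * MI M (k c) = ∑ a, ∑ z, ∑ c, M a * (μ c * k c a z) *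
        (lg (k c a z) - lg (Pc c z)) := by
      simp only [MI, Finset.mul_sum]
      rw [Finset.sum_comm]
      refine Finset.sum_congr rfl fun a _ => ?_
      rw [Finset.sum_comm]
      refine Finset.sum_congr rfl fun z _ => Finset.sum_congr rfl fun c _ => ?_
      simp only [hPc]
      ring
    have e3 : MI M K - ∑ c, μ c * MI M (k c) = ∑ a, ∑ z, ∑ c, M a * (μ c * k c a z) *
        (lg (μ c * Pc c z * (M a * K a z / P z)) - lg (M a * (μ c * k c a z))) := by
      rw [e1, e2]
      simp only [← Finset.sum_sub_distrib]
      refine Finset.sum_congr rfl fun a _ => Finset.sum_congr rfl fun z _ =>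
        Finset.sum_congr rfl fun c _ => ?_
      rw [← mul_sub]
      by_cases h : M a * (μ c * k c a z) = 0
      · rw [h]; simp
      · have h0 : 0 < M a * (μ c * k c a z) :=
          lt_of_le_of_ne (mul_nonneg (hM.1 a) (n1 _ _ _)) (Ne.symm h)
        obtain ⟨a1, a2, a3, a4, a5, a6⟩ := hpos c a z h0
        congr 1
        have l1 : lg (M a * K a z / P z) = lg (M a) + lg (K a z) - lg (P z) := by
          rw [lg, Real.logb_div (mul_pos a1 a4).ne' a5.ne', Real.logb_mul a1.ne' a4.ne']
        rw [lg_mul (mul_pos a2 a6).ne' (div_pos (mul_pos a1 a4) a5).ne', lg_mul a2.ne' a6.ne',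
          lg_mul a1.ne' (mul_pos a2 a3).ne', lg_mul a2.ne' a3.ne', l1]
        ring
    linarith
  · rintro ⟨a, z, c⟩ h
    obtain ⟨a1, a2, a3, a4, a5, a6⟩ := hpos c a z h
    exact mul_pos (mul_pos a2 a6) (div_pos (mul_pos a1 a4) a5)
  · simp only [Fintype.sum_prod_type]
    have e1 : ∑ a, ∑ z, ∑ c, M a * (μ c * k c a z) = 1 := by
      have : ∀ a, ∑ z, ∑ c, M a * (μ c * k c a z) = M a := by
        intro a
        rw [Finset.sum_comm]
        simp only [← Finset.mul_sum, (hk _ _).2, mul_one, hμ.2]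
      simp only [this, hM.2]
    rw [e1, Finset.sum_comm]
    have e2 : ∀ z, ∑ a, ∑ c, μ c * Pc c z * (M a * K a z / P z) ≤ ∑ c, μ c * Pc c z := by
      intro z
      rw [Finset.sum_comm]
      refine Finset.sum_le_sum fun c _ => ?_
      rw [← Finset.mul_sum, ← Finset.sum_div]
      exact mul_le_of_le_one_right (mul_nonneg (hμ.1 _) (nPc _ _)) (div_self_le_one _)
    refine (Finset.sum_le_sum fun z _ => e2 z).trans ?_
    rw [Finset.sum_comm]
    simp only [← Finset.mul_sum, hPcs, mul_one, hμ.2, le_refl]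

/-- Point mass. -/
noncomputable def dirac {A : Type*} (c : A) (a : A) : ℝ := if a = c then 1 else 0

lemma dirac_pmf {A : Type*} [Fintype A] (c : A) : IsPMF (dirac c) := by
  refine ⟨fun a => ?_, by simp [dirac]⟩
  unfold dirac; split_ifs <;> norm_num

lemma MI_dirac {A Z : Type*} [Fintype A] [Fintype Z] (c : A) (K : A → Z → ℝ) :
    MI (dirac c) K = 0 := by
  simp only [MI, dirac]
  refine Finset.sum_eq_zero fun a _ => Finset.sum_eq_zero fun z _ => ?_
  by_cases h : a = c <;> simp [h]

lemma KC_dirac {A B Y Z : Type*} [Fintype B] [Fintype Y]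
    (c : B) (W : A → B → Y → ℝ) (o : Y → Z) (a : A) (z : Z) :
    KC (dirac c) W o a z = ∑ y, if o y = z then W a c y else 0 := by
  simp only [KC, dirac]
  rw [Finset.sum_eq_single c]
  · simp
  · intro b _ hb; simp [hb]
  · simp

/-- Freezing the interfering input at its best value does not decrease the information. -/
lemma exists_dirac {A B Y Z : Type*} [Fintype A] [Fintype B] [Fintype Y] [Fintype Z]
    (M : A → ℝ) (μ : B → ℝ) (W : A → B → Y → ℝ) (o : Y → Z)
    (hM : IsPMF M) (hμ : IsPMF μ) (hW : ∀ a b, IsPMF (W a b)) :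
    ∃ c, MI M (KC μ W o) ≤ MI M (KC (dirac c) W o) := by
  by_contra! hcon
  have h1 := MI_convex M μ (fun c => KC (dirac c) W o) hM hμ
    (fun c a => KC_pmf (dirac c) W o (dirac_pmf c) hW a)
  have h2 : (fun a z => ∑ c, μ c * KC (dirac c) W o a z) = KC μ W o := by
    funext a z
    simp only [KC_dirac]
    rfl
  simp only [h2] at h1
  have h3 : ∑ c, μ c * MI M (KC (dirac c) W o) < ∑ c, μ c * MI M (KC μ W o) := by
    refine Finset.sum_lt_sum (fun c _ => mul_le_mul_of_nonneg_left (hcon c).le (hμ.1 c)) ?_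
    by_contra! hc
    have : ∑ c, μ c ≤ 0 := by
      refine Finset.sum_nonpos fun c hc' => ?_
      have := hc c hc'
      by_contra! hpos
      have := mul_lt_mul_of_pos_left (hcon c) hpos
      linarith
    rw [hμ.2] at this
    linarith
  rw [← Finset.sum_mul, hμ.2, one_mul] at h3
  linarith

/-- Unnormalized information region for uses indexed by `ι`. -/
def FR (ι : Type*) [Fintype ι] [DecidableEq ι] {A B Y Z1 Z2 : Type*} [Fintype A] [Fintype B]
    [Fintype Y] [Fintype Z1] [Fintype Z2] (W : A → B → Y → ℝ) (o1 : Y → Z1) (o2 : Y → Z2) :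
    Set (ℝ × ℝ) :=
  {r | ∃ (μ1 : (ι → A) → ℝ) (μ2 : (ι → B) → ℝ), IsPMF μ1 ∧ IsPMF μ2 ∧
    r = (MI μ1 (KC μ2 (WP W) (fun y i => o1 (y i))),
      MI μ2 (KC μ1 (WP (fun b a y => W a b y)) (fun y i => o2 (y i))))}

/-- Regrouping of indices into blocks. -/
def blk {κ ι τ : Type*} (e : κ ≃ ι × τ) (A : Type*) : (κ → A) ≃ (ι → τ → A) :=
  (e.arrowCongr (Equiv.refl A)).trans (Equiv.curry ι τ A)

lemma blk_apply {κ ι τ : Type*} (e : κ ≃ ι × τ) {A : Type*} (x : κ → A) (i : ι) (t : τ) :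
    blk e A x i t = x (e.symm (i, t)) := rfl

lemma MI_reindex {A A' Z Z' : Type*} [Fintype A] [Fintype Z] [Fintype A'] [Fintype Z']
    (eA : A ≃ A') (eZ : Z ≃ Z') (M : A' → ℝ) (K : A' → Z' → ℝ) :
    MI (fun a => M (eA a)) (fun a z => K (eA a) (eZ z)) = MI M K := by
  simp only [MI]
  have : ∀ z, ∑ a', M (eA a') * K (eA a') (eZ z) = ∑ a', M a' * K a' (eZ z) := fun z =>
    Equiv.sum_comp eA (fun a => M a * K a (eZ z))
  simp only [this]
  rw [← Equiv.sum_comp eA]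
  refine Finset.sum_congr rfl fun a _ => ?_
  rw [← Equiv.sum_comp eZ]

lemma WP_blk {κ ι τ A B Y : Type*} [Fintype κ] [Fintype ι] [Fintype τ] (e : κ ≃ ι × τ)
    (W : A → B → Y → ℝ) (x : κ → A) (x' : κ → B) (y : κ → Y) :
    WP W x x' y = WP (WP W) (blk e A x) (blk e B x') (blk e Y y) := by
  simp only [WP, blk_apply]
  rw [← Fintype.prod_prod_type' (fun i t => W (x (e.symm (i, t))) (x' (e.symm (i, t))) (y (e.symm (i, t))))]
  rw [← Equiv.prod_comp e.symm]

lemma KC_blk {κ ι τ A B Y Z : Type*} [Fintype κ] [Fintype ι] [Fintype τ]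
    [DecidableEq κ] [DecidableEq ι] [DecidableEq τ] [Fintype B] [Fintype Y]
    (e : κ ≃ ι × τ) (M : (ι → τ → B) → ℝ)
    (W : A → B → Y → ℝ) (o : Y → Z) (a : κ → A) (z : κ → Z) :
    KC (fun b => M (blk e B b)) (WP W) (fun y i => o (y i)) a z =
      KC M (WP (WP W)) (fun y i t => o (y i t)) (blk e A a) (blk e Z z) := by
  simp only [KC]
  rw [← Equiv.sum_comp (blk e B)]
  refine Finset.sum_congr rfl fun b _ => ?_
  congr 1
  rw [← Equiv.sum_comp (blk e Y)]
  refine Finset.sum_congr rfl fun y _ => ?_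
  rw [← WP_blk]
  have : ((fun i => o (y i)) = z) ↔ ((fun i t => o (blk e Y y i t)) = blk e Z z) := by
    rw [← (blk e Z).apply_eq_iff_eq]
    rfl
  by_cases h : (fun i => o (y i)) = z
  · rw [if_pos h, if_pos (this.1 h)]
  · rw [if_neg h, if_neg (mt this.2 h)]

lemma blk_pmf {κ ι τ A : Type*} [Fintype κ] [Fintype ι] [Fintype τ]
    [DecidableEq κ] [DecidableEq ι] [DecidableEq τ] [Fintype A] (e : κ ≃ ι × τ)
    (μ : ι → (τ → A) → ℝ) (hμ : ∀ i, IsPMF (μ i)) :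
    IsPMF (fun x : κ → A => ∏ i, μ i (blk e A x i)) := by
  have := isPMF_pi μ hμ
  refine ⟨fun x => this.1 _, ?_⟩
  rw [Equiv.sum_comp (blk e A) (fun y => ∏ i, μ i (y i))]
  exact this.2

lemma MI_blk {κ ι τ A B Y Z : Type*} [Fintype κ] [Fintype ι] [Fintype τ]
    [DecidableEq κ] [DecidableEq ι] [DecidableEq τ] [Fintype A] [Fintype B] [Fintype Y] [Fintype Z]
    (e : κ ≃ ι × τ) (μ1 : ι → (τ → A) → ℝ) (μ2 : ι → (τ → B) → ℝ) (W : A → B → Y → ℝ) (o : Y → Z)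
    (h1 : ∀ i, IsPMF (μ1 i)) (h2 : ∀ i, IsPMF (μ2 i)) (hW : ∀ a b, IsPMF (W a b)) :
    MI (fun x : κ → A => ∏ i, μ1 i (blk e A x i))
      (KC (fun x : κ → B => ∏ i, μ2 i (blk e B x i)) (WP W) (fun y i => o (y i))) =
    ∑ i, MI (μ1 i) (KC (μ2 i) (WP W) (fun y t => o (y t))) := by
  rw [← MI_prod μ1 _ h1 (fun i a => KC_pmf (μ2 i) (WP W) (fun y t => o (y t)) (h2 i) (WP_pmf W hW) a)]
  rw [← MI_reindex (blk e A) (blk e Z)]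
  congr 1
  funext a z
  rw [KC_blk e (fun b => ∏ i, μ2 i (b i))]
  rw [← KC_prod μ2 (WP W)]

lemma FR_sum {κ ι τ A B Y Z1 Z2 : Type*} [Fintype κ] [Fintype ι] [Fintype τ]
    [DecidableEq κ] [DecidableEq ι] [DecidableEq τ] [Fintype A] [Fintype B] [Fintype Y]
    [Fintype Z1] [Fintype Z2] (e : κ ≃ ι × τ)
    (W : A → B → Y → ℝ) (hW : ∀ a b, IsPMF (W a b)) (o1 : Y → Z1) (o2 : Y → Z2)
    (r : ι → ℝ × ℝ) (hr : ∀ i, r i ∈ FR τ W o1 o2) : ∑ i, r i ∈ FR κ W o1 o2 := by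
  choose μ1 μ2 h1 h2 hr using hr
  refine ⟨_, _, blk_pmf e μ1 h1, blk_pmf e μ2 h2, ?_⟩
  rw [MI_blk e μ1 μ2 W o1 h1 h2 hW,
    MI_blk e μ2 μ1 (fun b a y => W a b y) o2 h2 h1 (fun b a => hW a b)]
  ext
  · rw [Prod.fst_sum]; exact Finset.sum_congr rfl fun i _ => by rw [hr i]
  · rw [Prod.snd_sum]; exact Finset.sum_congr rfl fun i _ => by rw [hr i]

end Helpers3

section Helpers4

variable {X1 X2 Y1 Y2 : Type} [Fintype X1] [Fintype X2] [Fintype Y1] [Fintype Y2]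

/-- Curried form of the interference channel. -/
abbrev cur (ch : X1 × X2 → Y1 × Y2 → ℝ) : X1 → X2 → Y1 × Y2 → ℝ := fun a b y => ch (a, b) y

lemma cur_pmf {ch : X1 × X2 → Y1 × Y2 → ℝ} (hch : IsKernel ch) : ∀ a b, IsPMF (cur ch a b) :=
  fun a b => hch (a, b)

lemma En_iff (ch : X1 × X2 → Y1 × Y2 → ℝ) (hch : IsKernel ch) (n : ℕ) (r : ℝ × ℝ) :
    r ∈ En ch n ↔ ∃ s ∈ FR (Fin n) (cur ch) Prod.fst Prod.snd, r = (1 / (n : ℝ)) • s := by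
  have hW := cur_pmf hch
  have hW' : ∀ (x : Fin n → X1) (x' : Fin n → X2), IsPMF (WP (cur ch) x x') := WP_pmf _ hW
  have l1 : ∀ (μ1 : (Fin n → X1) → ℝ) (μ2 : (Fin n → X2) → ℝ), IsPMF μ1 → IsPMF μ2 →
      mi (jointIC ch n μ1 μ2) (fun w => w.1) (fun w => fun i => (w.2.2 i).1) =
      MI μ1 (KC μ2 (WP (cur ch)) (fun y i => (y i).1)) := fun μ1 μ2 h1 h2 =>
    mi_left μ1 μ2 (WP (cur ch)) (fun y i => (y i).1) h1 h2 hW'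
  have l2 : ∀ (μ1 : (Fin n → X1) → ℝ) (μ2 : (Fin n → X2) → ℝ), IsPMF μ1 → IsPMF μ2 →
      mi (jointIC ch n μ1 μ2) (fun w => w.2.1) (fun w => fun i => (w.2.2 i).2) =
      MI μ2 (KC μ1 (WP (fun b a y => cur ch a b y)) (fun y i => (y i).2)) := fun μ1 μ2 h1 h2 =>
    mi_right μ1 μ2 (WP (cur ch)) (fun y i => (y i).2) h1 h2 hW'
  constructor
  · rintro ⟨μ1, μ2, h1, h2, rfl⟩
    refine ⟨_, ⟨μ1, μ2, h1, h2, rfl⟩, ?_⟩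
    rw [l1 _ _ h1 h2, l2 _ _ h1 h2]
    rfl
  · rintro ⟨s, ⟨μ1, μ2, h1, h2, rfl⟩, rfl⟩
    refine ⟨μ1, μ2, h1, h2, ?_⟩
    rw [l1 _ _ h1 h2, l2 _ _ h1 h2]
    rfl

/-- Averages over blocks. -/
lemma En_avg (ch : X1 × X2 → Y1 × Y2 → ℝ) (hch : IsKernel ch) (n K : ℕ)
    (r : Fin K → ℝ × ℝ) (hr : ∀ i, r i ∈ En ch n) :
    (1 / (K : ℝ)) • ∑ i, r i ∈ En ch (K * n) := by
  have hW := cur_pmf hch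
  have : ∀ i, ∃ s ∈ FR (Fin n) (cur ch) Prod.fst Prod.snd, r i = (1 / (n : ℝ)) • s :=
    fun i => (En_iff ch hch n _).1 (hr i)
  choose s hs hrs using this
  rw [En_iff ch hch]
  refine ⟨∑ i, s i, FR_sum finProdFinEquiv.symm (cur ch) hW _ _ s hs, ?_⟩
  simp_rw [hrs]
  rw [← Finset.smul_sum, smul_smul]
  congr 1
  push_cast
  rw [one_div_mul_one_div]

lemma En_scale (ch : X1 × X2 → Y1 × Y2 → ℝ) (hch : IsKernel ch) (n K : ℕ) (hK : 0 < K)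
    (r : ℝ × ℝ) (hr : r ∈ En ch n) : r ∈ En ch (K * n) := by
  have := En_avg ch hch n K (fun _ => r) (fun _ => hr)
  have hK' : (K : ℝ) ≠ 0 := by exact_mod_cast hK.ne'
  simp only [Finset.sum_const, Finset.card_univ, Fintype.card_fin] at this
  rw [← Nat.cast_smul_eq_nsmul ℝ, smul_smul, one_div_mul_cancel hK', one_smul] at this
  exact this

lemma mem_union {ch : X1 × X2 → Y1 × Y2 → ℝ} {n : ℕ} (hn : 0 < n) {r : ℝ × ℝ}
    (hr : r ∈ En ch n) : r ∈ ⋃ n : ℕ, En ch (n + 1) := by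
  obtain ⟨m, rfl⟩ : ∃ m, n = m + 1 := ⟨n - 1, by omega⟩
  exact Set.mem_iUnion.2 ⟨m, hr⟩

lemma seg_mem (ch : X1 × X2 → Y1 × Y2 → ℝ) (hch : IsKernel ch) (r s : ℝ × ℝ)
    (hr : r ∈ ⋃ n : ℕ, En ch (n + 1)) (hs : s ∈ ⋃ n : ℕ, En ch (n + 1))
    (t : ℝ) (ht0 : 0 ≤ t) (ht1 : t ≤ 1) : t • r + (1 - t) • s ∈ capIC ch := by
  obtain ⟨n, hr⟩ := Set.mem_iUnion.1 hr
  obtain ⟨m, hs⟩ := Set.mem_iUnion.1 hs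
  set N := (n + 1) * (m + 1) with hN
  have hr' : r ∈ En ch N := by
    rw [hN, mul_comm]; exact En_scale ch hch (n + 1) (m + 1) (by omega) r hr
  have hs' : s ∈ En ch N := En_scale ch hch (m + 1) (n + 1) (by omega) s hs
  have hNpos : 0 < N := by positivity
  have hlim : Tendsto (fun K : ℕ => (⌊t * K⌋₊ : ℝ) / K) atTop (nhds t) :=
    (tendsto_nat_floor_mul_div_atTop ht0).comp tendsto_natCast_atTop_atTop
  have hlim2 : Tendsto (fun K : ℕ => ((⌊t * K⌋₊ : ℝ) / K) • r + (1 - (⌊t * K⌋₊ : ℝ) / K) • s)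
      atTop (nhds (t • r + (1 - t) • s)) :=
    (hlim.smul_const r).add ((tendsto_const_nhds.sub hlim).smul_const s)
  refine mem_closure_of_tendsto hlim2 ?_
  filter_upwards [eventually_gt_atTop 0] with K hK
  have hK' : (K : ℝ) ≠ 0 := by exact_mod_cast hK.ne'
  have hle : ⌊t * K⌋₊ ≤ K := by
    have : t * K ≤ K := mul_le_of_le_one_left (by positivity) ht1
    exact (Nat.floor_le_floor this).trans (by simp)
  have := En_avg ch hch N K (fun i => if i.1 < ⌊t * K⌋₊ then r else s)
    (fun i => by split_ifs <;> assumption)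
  have hsum : ∑ i : Fin K, (if i.1 < ⌊t * K⌋₊ then r else s)
      = (⌊t * K⌋₊ : ℝ) • r + ((K : ℝ) - (⌊t * K⌋₊ : ℝ)) • s := by
    rw [Fin.sum_univ_eq_sum_range (fun i => if i < ⌊t * K⌋₊ then r else s) K]
    rw [← Finset.sum_range_add_sum_Ico _ hle]
    rw [Finset.sum_congr rfl (g := fun _ => r), Finset.sum_congr (s₁ := Finset.Ico _ _) rfl (g := fun _ => s)]
    · simp only [Finset.sum_const, Finset.card_range, Nat.card_Ico]
      rw [← Nat.cast_smul_eq_nsmul ℝ, ← Nat.cast_smul_eq_nsmul ℝ, Nat.cast_sub hle]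
    · intro x hx
      rw [Finset.mem_Ico] at hx
      simp [hx.1]
    · intro x hx
      rw [Finset.mem_range] at hx
      simp [hx]
  rw [hsum] at this
  refine mem_union (Nat.mul_pos hK hNpos) ?_
  convert this using 1
  rw [smul_add, smul_smul, smul_smul]
  congr 2
  · ring
  · field_simp

lemma capIC_convex (ch : X1 × X2 → Y1 × Y2 → ℝ) (hch : IsKernel ch) : 
    ∀ r ∈ capIC ch, ∀ s ∈ capIC ch, ∀ t : ℝ, 0 ≤ t → t ≤ 1 → t • r + (1 - t) • s ∈ capIC ch := by
  intro r hr s hs t h0 h1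
  have hcl : IsClosed (capIC ch) := isClosed_closure
  have step1 : ∀ r ∈ ⋃ n : ℕ, En ch (n + 1), ∀ s ∈ capIC ch,
      t • r + (1 - t) • s ∈ capIC ch := by
    intro r hr s hs
    have : capIC ch ⊆ (fun s => t • r + (1 - t) • s) ⁻¹' capIC ch :=
      closure_minimal (fun s hs => seg_mem ch hch r s hr hs t h0 h1)
        (hcl.preimage (by fun_prop))
    exact this hs
  have : capIC ch ⊆ (fun r => t • r + (1 - t) • s) ⁻¹' capIC ch :=
    closure_minimal (fun r hr => step1 r hr s hs) (hcl.preimage (by fun_prop))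
  exact this hr

/-- The capacity region is comprehensive. -/
lemma rect_mem (ch : X1 × X2 → Y1 × Y2 → ℝ) (hch : IsKernel ch) (n : ℕ) (hn : 0 < n)
    (a b : ℝ) (hab : (a, b) ∈ En ch n) (x y : ℝ) (hx : 0 ≤ x) (hxa : x ≤ a) (hy : 0 ≤ y)
    (hyb : y ≤ b) : (x, y) ∈ capIC ch := by
  have hW := cur_pmf hch
  have hW1 : ∀ (x : Fin n → X1) (x' : Fin n → X2), IsPMF (WP (cur ch) x x') := WP_pmf _ hW
  have hW2 : ∀ (x' : Fin n → X2) (x : Fin n → X1), IsPMF (WP (fun b a y => cur ch a b y) x' x) :=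
    WP_pmf _ (fun b a => hW a b)
  have hconv := capIC_convex ch hch
  have hn' : (0:ℝ) < n := by exact_mod_cast hn
  have hin : ∀ r, r ∈ En ch n → r ∈ capIC ch := fun r hr => subset_closure (mem_union hn hr)
  obtain ⟨s, ⟨μ1, μ2, h1, h2, rfl⟩, hs⟩ := (En_iff ch hch n _).1 hab
  obtain ⟨c2, hc2⟩ := exists_dirac μ1 μ2 (WP (cur ch)) (fun y i => (y i).1) h1 h2 hW1
  obtain ⟨c1, hc1⟩ := exists_dirac μ2 μ1 (WP (fun b a y => cur ch a b y)) (fun y i => (y i).2)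
    h2 h1 hW2
  have ha : a = (1 / (n:ℝ)) * MI μ1 (KC μ2 (WP (cur ch)) (fun y i => (y i).1)) :=
    congrArg Prod.fst hs
  have hb : b = (1 / (n:ℝ)) * MI μ2 (KC μ1 (WP (fun b a y => cur ch a b y)) (fun y i => (y i).2)) :=
    congrArg Prod.snd hs
  have p00 : ((0:ℝ), (0:ℝ)) ∈ capIC ch := by
    refine hin _ ((En_iff ch hch n _).2 ⟨_, ⟨dirac c1, dirac c2, dirac_pmf _, dirac_pmf _, rfl⟩, ?_⟩)
    rw [MI_dirac, MI_dirac]; simp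
  obtain ⟨b', hbb, p0b⟩ : ∃ b', b ≤ b' ∧ ((0:ℝ), b') ∈ capIC ch := by
    refine ⟨(1 / (n:ℝ)) * MI μ2 (KC (dirac c1) (WP (fun b a y => cur ch a b y))
      (fun y i => (y i).2)), ?_, hin _ ((En_iff ch hch n _).2
      ⟨_, ⟨dirac c1, μ2, dirac_pmf _, h2, rfl⟩, ?_⟩)⟩
    rotate_left
    · rw [MI_dirac]
      exact Prod.ext (by simp) rfl
    · rw [hb]
      exact mul_le_mul_of_nonneg_left hc1 (by positivity)
  obtain ⟨a', haa, pa0⟩ : ∃ a', a ≤ a' ∧ (a', (0:ℝ)) ∈ capIC ch := by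
    refine ⟨(1 / (n:ℝ)) * MI μ1 (KC (dirac c2) (WP (cur ch))
      (fun y i => (y i).1)), ?_, hin _ ((En_iff ch hch n _).2
      ⟨_, ⟨μ1, dirac c2, h1, dirac_pmf _, rfl⟩, ?_⟩)⟩
    rotate_left
    · rw [MI_dirac]
      exact Prod.ext rfl (by simp)
    · rw [ha]
      exact mul_le_mul_of_nonneg_left hc2 (by positivity)
  have frac : ∀ u w : ℝ, 0 ≤ u → u ≤ w → ∃ t : ℝ, 0 ≤ t ∧ t ≤ 1 ∧ t * w = u := by
    intro u w hu huw
    rcases hu.eq_or_lt with h | h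
    · exact ⟨0, le_rfl, zero_le_one, by rw [zero_mul]; exact h⟩
    · have hw : 0 < w := h.trans_le huw
      exact ⟨u / w, by positivity, (div_le_one hw).2 huw, div_mul_cancel₀ _ hw.ne'⟩
  have q0b : ((0:ℝ), b) ∈ capIC ch := by
    obtain ⟨t, t0, t1, ht⟩ := frac b b' (hy.trans hyb) hbb
    have := hconv _ p0b _ p00 t t0 t1
    simpa [ht] using this
  have qx0 : (x, (0:ℝ)) ∈ capIC ch := by
    obtain ⟨t, t0, t1, ht⟩ := frac x a' hx (hxa.trans haa)
    have := hconv _ pa0 _ p00 t t0 t1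
    simpa [ht] using this
  have qxb : (x, b) ∈ capIC ch := by
    obtain ⟨t, t0, t1, ht⟩ := frac x a hx hxa
    have := hconv _ (hin _ hab) _ q0b t t0 t1
    have e : t * b + (1 - t) * b = b := by ring
    simpa [ht, e] using this
  obtain ⟨t, t0, t1, ht⟩ := frac y b hy hyb
  have := hconv _ qxb _ qx0 t t0 t1
  have e : t * x + (1 - t) * x = x := by ring
  simpa [ht, e] using this

end Helpers4

section Helpers5

/-- Fano plus data processing in one step. -/
lemma one_shot_converse {A B Z : Type*} [Fintype A] [Fintype B] [Fintype Z] (Q : A × B → ℝ)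
    (hQ : IsPMF Q) (k : A → Z → ℝ) (hk : ∀ a, IsPMF (k a)) (g : Z → B → A) :
    HC Q ≤ (∑ w, Q w * ∑ z, k w.1 z * (lg (k w.1 z) - lg (∑ w', Q w' * k w'.1 z))) + 1 +
      (∑ w, Q w * ∑ z, k w.1 z * (if g z w.2 = w.1 then 0 else 1)) * lg (Fintype.card A) := by
  have hne : Nonempty (A × B) := by
    by_contra hcon
    rw [not_nonempty_iff] at hcon
    have := hQ.2
    simp at this
  have hA : Nonempty A := hne.map Prod.fst
  have hcard : (0:ℝ) < Fintype.card A := by exact_mod_cast Fintype.card_pos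
  have hcard1 : (1:ℝ) ≤ Fintype.card A := by exact_mod_cast Fintype.card_pos
  set P : Z → ℝ := fun z => ∑ w', Q w' * k w'.1 z with hP
  set R : B → ℝ := fun b => ∑ a, Q (a, b) with hR
  set r : A → B → Z → ℝ := fun a b z =>
    (1 / 2) * (if g z b = a then 1 else 0) + (1 / 2) * (1 / Fintype.card A) with hr
  have hrpos : ∀ a b z, 0 < r a b z := by
    intro a b z
    simp only [hr]
    split_ifs <;> positivity
  have hrsum : ∀ b z, ∑ a, r a b z = 1 := by
    intro b z
    simp only [hr, Finset.sum_add_distrib, ← Finset.mul_sum]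
    simp
    field_simp
    norm_num
  have hrlg : ∀ a b z, -1 - (if g z b = a then 0 else 1) * lg (Fintype.card A) ≤ lg (r a b z) := by
    intro a b z
    have l2 : lg (1 / 2) = -1 := by
      simp [lg, Real.logb_inv]
    split_ifs with h
    · rw [zero_mul, sub_zero, ← l2]
      refine Real.logb_le_logb_of_le (by norm_num) (by norm_num) ?_
      simp only [hr, h, if_true]
      have : (0:ℝ) ≤ (1 / 2) * (1 / Fintype.card A) := by positivity
      linarith
    · have : r a b z = (1 / 2) * (1 / Fintype.card A) := by simp [hr, h]
      rw [this, lg_mul (by norm_num) (by positivity), l2]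
      have : lg (1 / (Fintype.card A : ℝ)) = - lg (Fintype.card A) := by
        simp [lg, Real.logb_inv]
      rw [this]
      linarith
  have nP : ∀ z, 0 ≤ P z := fun z =>
    Finset.sum_nonneg fun w _ => mul_nonneg (hQ.1 w) ((hk _).1 z)
  have nR : ∀ b, 0 ≤ R b := fun b => Finset.sum_nonneg fun a _ => hQ.1 _
  have sP : ∑ z, P z = 1 := by
    simp only [hP]
    rw [Finset.sum_comm]
    simp only [← Finset.mul_sum, (hk _).2, mul_one, hQ.2]
  have sR : ∑ b, R b = 1 := by
    simp only [hR]
    rw [Finset.sum_comm, ← Fintype.sum_prod_type', hQ.2]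
  have hpos : ∀ (w : A × B) z, 0 < Q w * k w.1 z → 0 < Q w ∧ 0 < k w.1 z ∧ 0 < P z ∧ 0 < R w.2 := by
    intro w z h
    have a1 : 0 < Q w := lt_of_le_of_ne (hQ.1 w) (left_ne_zero_of_mul h.ne').symm
    have a2 : 0 < k w.1 z := lt_of_le_of_ne ((hk _).1 z) (right_ne_zero_of_mul h.ne').symm
    refine ⟨a1, a2, ?_, ?_⟩
    · exact lt_of_lt_of_le h (Finset.single_le_sum (f := fun w => Q w * k w.1 z)
        (fun w _ => mul_nonneg (hQ.1 w) ((hk _).1 z)) (Finset.mem_univ w))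
    · exact lt_of_lt_of_le a1 (Finset.single_le_sum (f := fun a => Q (a, w.2))
        (fun a _ => hQ.1 _) (Finset.mem_univ w.1))
  have key := gibbs (fun w : (A × B) × Z => Q w.1 * k w.1.1 w.2)
    (fun w => P w.2 * R w.1.2 * r w.1.1 w.1.2 w.2)
    (fun w => mul_nonneg (hQ.1 _) ((hk _).1 _))
    (fun w => mul_nonneg (mul_nonneg (nP _) (nR _)) (hrpos _ _ _).le)
    (fun w h => by
      obtain ⟨a1, a2, a3, a4⟩ := hpos _ _ h
      exact mul_pos (mul_pos a3 a4) (hrpos _ _ _)) ?_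
  · rw [Fintype.sum_prod_type] at key
    have hs1 : ∑ w : A × B, Q w * ∑ z, k w.1 z = 1 := by simp only [(hk _).2, mul_one, hQ.2]
    have hH : HC Q = ∑ w, ∑ z, Q w * k w.1 z * (lg (R w.2) - lg (Q w)) := by
      rw [HC, ← Finset.sum_neg_distrib]
      refine Finset.sum_congr rfl fun w _ => ?_
      rw [← Finset.sum_mul, ← Finset.mul_sum, (hk _).2]
      ring
    have expand : HC Q - (∑ w, Q w * ∑ z, k w.1 z * (lg (k w.1 z) - lg (P z))) - 1 -
      (∑ w, Q w * ∑ z, k w.1 z * (if g z w.2 = w.1 then 0 else 1)) * lg (Fintype.card A) =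
      ∑ w, ∑ z, Q w * k w.1 z * (lg (R w.2) - lg (Q w) - (lg (k w.1 z) - lg (P z)) +
        (-1 - (if g z w.2 = w.1 then 0 else 1) * lg (Fintype.card A))) := by
      have gen : ∀ S : ℝ, S = ∑ w : A × B, Q w * ∑ z, k w.1 z →
        HC Q - (∑ w, Q w * ∑ z, k w.1 z * (lg (k w.1 z) - lg (P z))) - S -
        (∑ w, Q w * ∑ z, k w.1 z * (if g z w.2 = w.1 then 0 else 1)) * lg (Fintype.card A) =
        ∑ w, ∑ z, Q w * k w.1 z * (lg (R w.2) - lg (Q w) - (lg (k w.1 z) - lg (P z)) +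
        (-1 - (if g z w.2 = w.1 then 0 else 1) * lg (Fintype.card A))) := by
        intro S hS
        rw [hH, hS]
        simp only [Finset.mul_sum, Finset.sum_mul, ← Finset.sum_sub_distrib]
        refine Finset.sum_congr rfl fun w _ => Finset.sum_congr rfl fun z _ => ?_
        ring
      exact gen 1 hs1.symm
    have hle : ∑ w : A × B, ∑ z, Q w * k w.1 z * (lg (R w.2) - lg (Q w) - (lg (k w.1 z) - lg (P z)) +
        (-1 - (if g z w.2 = w.1 then 0 else 1) * lg (Fintype.card A))) ≤
        ∑ w : A × B, ∑ z, Q w * k w.1 z *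
          (lg (P z * R w.2 * r w.1 w.2 z) - lg (Q w * k w.1 z)) := by
      refine Finset.sum_le_sum fun w _ => Finset.sum_le_sum fun z _ => ?_
      have h0 : 0 ≤ Q w * k w.1 z := mul_nonneg (hQ.1 _) ((hk _).1 _)
      rcases h0.eq_or_lt with h | h
      · rw [← h]; simp
      · refine mul_le_mul_of_nonneg_left ?_ h0
        obtain ⟨a1, a2, a3, a4⟩ := hpos _ _ h
        rw [lg_mul (mul_pos a3 a4).ne' (hrpos _ _ _).ne', lg_mul a3.ne' a4.ne', lg_mul a1.ne' a2.ne']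
        have := hrlg w.1 w.2 z
        linarith
    have := hle.trans key
    rw [← expand] at this
    linarith
  · have e1 : ∑ w : (A × B) × Z, Q w.1 * k w.1.1 w.2 = 1 := by
      rw [Fintype.sum_prod_type]
      simp only [← Finset.mul_sum, (hk _).2, mul_one, hQ.2]
    rw [e1, Fintype.sum_prod_type, Fintype.sum_prod_type, Finset.sum_comm]
    have e2 : ∀ b, ∑ a, ∑ z, P z * R b * r a b z = R b := by
      intro b
      rw [Finset.sum_comm]
      simp only [← Finset.mul_sum, hrsum, mul_one, ← Finset.sum_mul, sP, one_mul]
    simp only [e2, sR, le_refl]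

lemma pr_pmf {Ω α : Type*} [Fintype Ω] [Fintype α] (p : Ω → ℝ) (hp : IsPMF p) (X : Ω → α) :
    IsPMF (pr p X) := by
  refine ⟨fun x => Finset.sum_nonneg fun ω _ => ?_, ?_⟩
  · split_ifs
    · exact hp.1 ω
    · exact le_rfl
  · have := sum_pr_mul p X (fun _ => 1)
    simpa [hp.2] using this

lemma MI_push {Ω A Z : Type*} [Fintype Ω] [Fintype A] [Fintype Z] (p : Ω → ℝ) (X : Ω → A)
    (K : A → Z → ℝ) : MI (pr p X) K =
      ∑ w, p w * ∑ z, K (X w) z * (lg (K (X w) z) - lg (∑ w', p w' * K (X w') z)) := by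
  simp only [MI]
  have h : ∀ z, ∑ a', pr p X a' * K a' z = ∑ w', p w' * K (X w') z := fun z =>
    sum_pr_mul p X (fun a => K a z)
  simp only [h]
  rw [← sum_pr_mul p X (fun a => ∑ z, K a z * (lg (K a z) - lg (∑ w', p w' * K (X w') z)))]
  refine Finset.sum_congr rfl fun a _ => ?_
  rw [Finset.mul_sum]
  exact Finset.sum_congr rfl fun z _ => by ring

/-- Error probability of the first user. -/
noncomputable def PE1 {A1 B1 A2 B2 X1 X2 Y Z : Type*} [Fintype A1] [Fintype B1] [Fintype A2]
    [Fintype B2] [Fintype Y] (Q1 : A1 × B1 → ℝ) (Q2 : A2 × B2 → ℝ) (W : X1 → X2 → Y → ℝ)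
    (o : Y → Z) (f1 : A1 → X1) (f2 : A2 → X2) (g : Z → B1 → A1) : ℝ :=
  ∑ w1, ∑ w2, ∑ y, Q1 w1 * Q2 w2 * W (f1 w1.1) (f2 w2.1) y *
    (if g (o y) w1.2 = w1.1 then 0 else 1)

lemma PE1_eq {A1 B1 A2 B2 X1 X2 Y Z : Type*} [Fintype A1] [Fintype B1] [Fintype A2]
    [Fintype B2] [Fintype Y] [Fintype X2] [Fintype Z]
    (Q1 : A1 × B1 → ℝ) (Q2 : A2 × B2 → ℝ) (W : X1 → X2 → Y → ℝ)
    (o : Y → Z) (f1 : A1 → X1) (f2 : A2 → X2) (g : Z → B1 → A1) :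
    PE1 Q1 Q2 W o f1 f2 g = ∑ w1, Q1 w1 * ∑ z, KC (pr Q2 (fun w => f2 w.1)) W o (f1 w1.1) z *
      (if g z w1.2 = w1.1 then 0 else 1) := by
  rw [PE1]
  refine Finset.sum_congr rfl fun w1 _ => ?_
  rw [KC_sum _ W o (f1 w1.1) (fun z => if g z w1.2 = w1.1 then 0 else 1),
    sum_pr_mul Q2 (fun w => f2 w.1)
      (fun x => ∑ y, W (f1 w1.1) x y * (if g (o y) w1.2 = w1.1 then 0 else 1)), Finset.mul_sum]
  refine Finset.sum_congr rfl fun w2 _ => ?_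
  rw [← mul_assoc, Finset.mul_sum]
  exact Finset.sum_congr rfl fun y _ => by ring

variable {U1 V1 U2 V2 X1 X2 Y1 Y2 : Type}
  [Fintype U1] [Fintype V1] [Fintype U2] [Fintype V2]
  [Fintype X1] [Fintype X2] [Fintype Y1] [Fintype Y2]

/-- Law of the i.i.d. extension. -/
noncomputable abbrev iid {U V : Type} (q : U × V → ℝ) (n : ℕ) : (Fin n → U) × (Fin n → V) → ℝ :=
  fun w => ∏ i, q (w.1 i, w.2 i)

lemma iid_pmf {U V : Type} [Fintype U] [Fintype V] (q : U × V → ℝ) (hq : IsPMF q) (n : ℕ) :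
    IsPMF (iid q n) := by
  refine ⟨fun w => Finset.prod_nonneg fun i _ => hq.1 _, ?_⟩
  have := (isPMF_pi (fun _ : Fin n => q) (fun _ => hq)).2
  rw [sum_pair_pi] at this
  rw [Fintype.sum_prod_type]
  exact this

lemma PerrOwn_eq (ch : X1 × X2 → Y1 × Y2 → ℝ)
    (q1 : U1 × V1 → ℝ) (q2 : U2 × V2 → ℝ) (n : ℕ)
    (f1 : (Fin n → U1) → Fin n → X1) (f2 : (Fin n → U2) → Fin n → X2)
    (g1 : (Fin n → Y1) → (Fin n → V1) → Fin n → U1)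
    (g2 : (Fin n → Y2) → (Fin n → V2) → Fin n → U2) :
    PerrOwn ch q1 q2 n f1 f2 g1 g2 = ∑ w1, ∑ w2, ∑ y : Fin n → Y1 × Y2,
      iid q1 n w1 * iid q2 n w2 * WP (cur ch) (f1 w1.1) (f2 w2.1) y *
      (if g1 (fun i => (y i).1) w1.2 = w1.1 ∧ g2 (fun i => (y i).2) w2.2 = w2.1 then 0 else 1) := by
  simp only [Fintype.sum_prod_type]
  rfl

lemma PerrOwn_ge1 (ch : X1 × X2 → Y1 × Y2 → ℝ) (hch : IsKernel ch)
    (q1 : U1 × V1 → ℝ) (q2 : U2 × V2 → ℝ) (hq1 : IsPMF q1) (hq2 : IsPMF q2) (n : ℕ)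
    (f1 : (Fin n → U1) → Fin n → X1) (f2 : (Fin n → U2) → Fin n → X2)
    (g1 : (Fin n → Y1) → (Fin n → V1) → Fin n → U1)
    (g2 : (Fin n → Y2) → (Fin n → V2) → Fin n → U2) :
    PE1 (iid q1 n) (iid q2 n) (WP (cur ch)) (fun y i => (y i).1) f1 f2 g1 ≤
      PerrOwn ch q1 q2 n f1 f2 g1 g2 := by
  rw [PerrOwn_eq, PE1]
  refine Finset.sum_le_sum fun w1 _ => Finset.sum_le_sum fun w2 _ => Finset.sum_le_sum fun y _ => ?_
  refine mul_le_mul_of_nonneg_left ?_ (mul_nonneg (mul_nonneg ((iid_pmf q1 hq1 n).1 _)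
    ((iid_pmf q2 hq2 n).1 _)) ((WP_pmf _ (cur_pmf hch) _ _).1 _))
  by_cases h : g1 (fun i => (y i).1) w1.2 = w1.1
  · rw [if_pos h]; split_ifs <;> norm_num
  · rw [if_neg h, if_neg (fun hh => h hh.1)]

lemma PerrOwn_ge2 (ch : X1 × X2 → Y1 × Y2 → ℝ) (hch : IsKernel ch)
    (q1 : U1 × V1 → ℝ) (q2 : U2 × V2 → ℝ) (hq1 : IsPMF q1) (hq2 : IsPMF q2) (n : ℕ)
    (f1 : (Fin n → U1) → Fin n → X1) (f2 : (Fin n → U2) → Fin n → X2)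
    (g1 : (Fin n → Y1) → (Fin n → V1) → Fin n → U1)
    (g2 : (Fin n → Y2) → (Fin n → V2) → Fin n → U2) :
    PE1 (iid q2 n) (iid q1 n) (WP (fun b a y => cur ch a b y)) (fun y i => (y i).2) f2 f1 g2 ≤
      PerrOwn ch q1 q2 n f1 f2 g1 g2 := by
  rw [PerrOwn_eq, PE1, Finset.sum_comm]
  refine Finset.sum_le_sum fun w1 _ => Finset.sum_le_sum fun w2 _ => Finset.sum_le_sum fun y _ => ?_
  rw [mul_comm (iid q2 n w2)]
  refine mul_le_mul_of_nonneg_left ?_ (mul_nonneg (mul_nonneg ((iid_pmf q1 hq1 n).1 _)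
    ((iid_pmf q2 hq2 n).1 _)) ((WP_pmf _ (cur_pmf hch) _ _).1 _))
  by_cases h : g2 (fun i => (y i).2) w2.2 = w2.1
  · rw [if_pos h]; split_ifs <;> norm_num
  · rw [if_neg h, if_neg (fun hh => h hh.2)]

/-- Single-user converse bound. -/
lemma user_converse {U1 V1 U2 V2 X1 X2 Y Z : Type}
    [Fintype U1] [Fintype V1] [Fintype U2] [Fintype V2]
    [Fintype X1] [Fintype X2] [Fintype Y] [Fintype Z] (W : X1 → X2 → Y → ℝ)
    (hW : ∀ a b, IsPMF (W a b)) (o : Y → Z)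
    (q1 : U1 × V1 → ℝ) (q2 : U2 × V2 → ℝ) (hq1 : IsPMF q1) (hq2 : IsPMF q2) (n : ℕ) (hn : 0 < n)
    (f1 : (Fin n → U1) → Fin n → X1) (f2 : (Fin n → U2) → Fin n → X2)
    (g : (Fin n → Z) → (Fin n → V1) → Fin n → U1) :
    HC q1 - (1 / (n:ℝ) + PE1 (iid q1 n) (iid q2 n) (WP W) (fun y i => o (y i)) f1 f2 g *
      lg (Fintype.card U1)) ≤
    (1 / (n:ℝ)) * MI (pr (iid q1 n) (fun w => f1 w.1))
      (KC (pr (iid q2 n) (fun w => f2 w.1)) (WP W) (fun y i => o (y i))) := by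
  have hn' : (0:ℝ) < n := by exact_mod_cast hn
  have hK := KC_pmf (pr (iid q2 n) (fun w => f2 w.1)) (WP W) (fun (y : Fin n → Y) i => o (y i))
    (pr_pmf _ (iid_pmf q2 hq2 n) _) (WP_pmf W hW)
  have h := one_shot_converse (iid q1 n) (iid_pmf q1 hq1 n)
    (fun u => KC (pr (iid q2 n) (fun w => f2 w.1)) (WP W) (fun y i => o (y i)) (f1 u))
    (fun u => hK (f1 u)) g
  rw [HC_prod q1 hq1, ← PE1_eq] at h
  rw [MI_push]
  have hl : lg (Fintype.card (Fin n → U1)) = n * lg (Fintype.card U1) := by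
    rw [Fintype.card_fun, Fintype.card_fin]
    push_cast
    rw [lg, Real.logb_pow]
  rw [hl, Fintype.card_fin] at h
  have e : (1 / (n:ℝ)) * (n * HC q1) = HC q1 := by field_simp
  have := mul_le_mul_of_nonneg_left h (by positivity : (0:ℝ) ≤ 1 / n)
  rw [e] at this
  refine le_trans (sub_le_iff_le_add.2 (this.trans (le_of_eq ?_))) le_rfl
  field_simp
  ring

lemma converse (ch : X1 × X2 → Y1 × Y2 → ℝ) (hch : IsKernel ch)
    (q1 : U1 × V1 → ℝ) (q2 : U2 × V2 → ℝ) (hq1 : IsPMF q1) (hq2 : IsPMF q2)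
    (h : ReliableOwn ch q1 q2) : (HC q1, HC q2) ∈ capIC ch := by
  obtain ⟨f1, f2, g1, g2, hlim⟩ := h
  set e : ℕ → ℝ := fun n => PerrOwn ch q1 q2 n (f1 n) (f2 n) (g1 n) (g2 n) with he
  have card_nn : ∀ {U V : Type} [Fintype U] [Fintype V] (q : U × V → ℝ), IsPMF q →
      0 ≤ lg (Fintype.card U) := by
    intro U V _ _ q hq
    refine Real.logb_nonneg (by norm_num) ?_
    have hne : Nonempty (U × V) := by
      by_contra hcon
      rw [not_nonempty_iff] at hcon
      have := hq.2
      simp at this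
    have : Nonempty U := hne.map Prod.fst
    exact_mod_cast Fintype.card_pos
  have hinv : Tendsto (fun n : ℕ => 1 / (n:ℝ)) atTop (nhds 0) := tendsto_one_div_atTop_nhds_zero_nat
  have lim : ∀ (H c : ℝ), 0 ≤ H →
      Tendsto (fun n : ℕ => max 0 (H - (1 / (n:ℝ) + e n * c))) atTop (nhds H) := by
    intro H c hH
    have h1 : Tendsto (fun n : ℕ => max 0 (H - (1 / (n:ℝ) + e n * c))) atTop
        (nhds (max 0 (H - (0 + 0 * c)))) :=
      tendsto_const_nhds.max (tendsto_const_nhds.sub (hinv.add (hlim.mul_const c)))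
    simpa [max_eq_right hH] using h1
  have hl := (lim (HC q1) (lg (Fintype.card U1)) (HC_nonneg q1 hq1)).prodMk_nhds
    (lim (HC q2) (lg (Fintype.card U2)) (HC_nonneg q2 hq2))
  refine (isClosed_closure : IsClosed (capIC ch)).mem_of_tendsto hl ?_
  filter_upwards [eventually_gt_atTop 0] with n hn
  have hn' : (0:ℝ) < n := by exact_mod_cast hn
  have hW := cur_pmf hch
  have p1 := pr_pmf _ (iid_pmf q1 hq1 n) (fun w => f1 n w.1)
  have p2 := pr_pmf _ (iid_pmf q2 hq2 n) (fun w => f2 n w.1)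
  have hmem := (En_iff ch hch n _).2 ⟨_, ⟨_, _, p1, p2, rfl⟩, rfl⟩
  have c1 := user_converse (cur ch) hW Prod.fst q1 q2 hq1 hq2 n hn (f1 n) (f2 n) (g1 n)
  have c2 := user_converse (fun b a y => cur ch a b y) (fun b a => hW a b) Prod.snd q2 q1 hq2 hq1 n hn
    (f2 n) (f1 n) (g2 n)
  have d1 := mul_le_mul_of_nonneg_right
    (PerrOwn_ge1 ch hch q1 q2 hq1 hq2 n (f1 n) (f2 n) (g1 n) (g2 n)) (card_nn q1 hq1)
  have d2 := mul_le_mul_of_nonneg_right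
    (PerrOwn_ge2 ch hch q1 q2 hq1 hq2 n (f1 n) (f2 n) (g1 n) (g2 n)) (card_nn q2 hq2)
  refine rect_mem ch hch n hn _ _ hmem _ _ (le_max_left _ _) ?_ (le_max_left _ _) ?_
  · refine max_le (mul_nonneg (by positivity) (MI_nonneg _ _ p1
      (KC_pmf _ _ _ p2 (WP_pmf _ hW)))) (le_trans ?_ c1)
    simp only [he]
    linarith
  · refine max_le (mul_nonneg (by positivity) (MI_nonneg _ _ p2
      (KC_pmf _ _ _ p1 (WP_pmf _ (fun b a => hW a b))))) (le_trans ?_ c2)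
    simp only [he]
    linarith

end Helpers5

section Helpers6

/-- The random coding bad event probability. -/
noncomputable def bad {A B X Z : Type*} [Fintype A] [Fintype B] [Fintype X] [Fintype Z]
    (Q : A × B → ℝ) (M : X → ℝ) (K : X → Z → ℝ) (T : ℝ) : ℝ :=
  ∑ w, Q w * ∑ z, ∑ x, M x * (K x z *
    (if T * (∑ a, Q (a, w.2)) * (∑ x', M x' * K x' z) < Q w * K x z then 0 else 1))

/-- Random coding for a single user. -/
lemma single_user {A B X Z : Type*} [Fintype A] [Fintype B] [Fintype X] [Fintype Z]
    (Q : A × B → ℝ) (hQ : IsPMF Q) (M : X → ℝ) (hM : IsPMF M) (K : X → Z → ℝ)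
    (hK : ∀ x, IsPMF (K x)) (T : ℝ) (hT : 0 < T) :
    ∃ dec : (A → X) → Z → B → A,
      ∑ c : A → X, (∏ a, M (c a)) * ∑ w, Q w * ∑ z, K (c w.1) z *
        (if dec c z w.2 = w.1 then 0 else 1) ≤ bad Q M K T + 1 / T := by
  have hne : Nonempty (A × B) := by
    by_contra hcon
    rw [not_nonempty_iff] at hcon
    have := hQ.2
    simp at this
  have hA : Nonempty A := hne.map Prod.fst
  set P : Z → ℝ := fun z => ∑ x', M x' * K x' z with hP
  set R : B → ℝ := fun b => ∑ a, Q (a, b) with hR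
  let G : X → A → B → Z → Prop := fun x u v z => T * R v * P z < Q (u, v) * K x z
  let dec : (A → X) → Z → B → A := fun c z v =>
    if h : ∃ u, G (c u) u v z then h.choose else hA.some
  refine ⟨dec, ?_⟩
  have herr : ∀ (c : A → X) (z : Z) (w : A × B), (if dec c z w.2 = w.1 then (0:ℝ) else 1) ≤
      (if G (c w.1) w.1 w.2 z then 0 else 1) +
        ∑ u', (if u' = w.1 then 0 else (if G (c u') u' w.2 z then 1 else 0)) := by
    intro c z w
    have hn : ∀ u', (0:ℝ) ≤ (if u' = w.1 then 0 else (if G (c u') u' w.2 z then 1 else 0)) := by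
      intro u'; split_ifs <;> norm_num
    have hn' := Finset.sum_nonneg (fun u' (_ : u' ∈ (Finset.univ : Finset A)) => hn u')
    by_cases h1 : G (c w.1) w.1 w.2 z
    · rw [if_pos h1, zero_add]
      by_cases h2 : dec c z w.2 = w.1
      · rw [if_pos h2]; exact hn'
      · rw [if_neg h2]
        have hex : ∃ u, G (c u) u w.2 z := ⟨w.1, h1⟩
        have hd : dec c z w.2 = hex.choose := dif_pos hex
        have hs := hex.choose_spec
        rw [← hd] at hs
        refine le_trans (le_of_eq ?_) (Finset.single_le_sum (fun u' _ => hn u')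
          (Finset.mem_univ (dec c z w.2)))
        rw [if_neg h2, if_pos hs]
    · rw [if_neg h1]
      have : (if dec c z w.2 = w.1 then (0:ℝ) else 1) ≤ 1 := by split_ifs <;> norm_num
      linarith
  have nM : ∀ c : A → X, 0 ≤ ∏ a, M (c a) := fun c => Finset.prod_nonneg fun a _ => hM.1 _
  have step1 : ∑ c : A → X, (∏ a, M (c a)) * ∑ w, Q w * ∑ z, K (c w.1) z *
        (if dec c z w.2 = w.1 then 0 else 1) ≤
      ∑ c : A → X, (∏ a, M (c a)) * ∑ w, Q w * ∑ z, K (c w.1) z *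
        ((if G (c w.1) w.1 w.2 z then 0 else 1) +
        ∑ u', (if u' = w.1 then 0 else (if G (c u') u' w.2 z then 1 else 0))) := by
    refine Finset.sum_le_sum fun c _ => mul_le_mul_of_nonneg_left
      (Finset.sum_le_sum fun w _ => mul_le_mul_of_nonneg_left
        (Finset.sum_le_sum fun z _ => mul_le_mul_of_nonneg_left (herr c z w) ((hK _).1 z))
        (hQ.1 w)) (nM c)
  have step2 : ∑ c : A → X, (∏ a, M (c a)) * ∑ w, Q w * ∑ z, K (c w.1) z *
        ((if G (c w.1) w.1 w.2 z then 0 else 1) +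
        ∑ u', (if u' = w.1 then 0 else (if G (c u') u' w.2 z then 1 else 0))) =
      (∑ w, Q w * ∑ z, ∑ c : A → X, (∏ a, M (c a)) * (K (c w.1) z *
        (if G (c w.1) w.1 w.2 z then 0 else 1))) +
      ∑ w, Q w * ∑ z, ∑ u', ∑ c : A → X, (∏ a, M (c a)) * (K (c w.1) z *
        (if u' = w.1 then 0 else (if G (c u') u' w.2 z then 1 else 0))) := by
    rw [← Finset.sum_add_distrib]
    simp only [Finset.mul_sum (s := (Finset.univ : Finset (A × B)))]
    rw [Finset.sum_comm]
    refine Finset.sum_congr rfl fun w _ => ?_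
    rw [← mul_add, ← Finset.sum_add_distrib]
    simp only [Finset.mul_sum (s := (Finset.univ : Finset Z))]
    rw [Finset.sum_comm]
    refine Finset.sum_congr rfl fun z _ => ?_
    rw [Finset.sum_comm (s := (Finset.univ : Finset A)), ← Finset.sum_add_distrib,
      Finset.mul_sum (s := (Finset.univ : Finset (A → X)))]
    refine Finset.sum_congr rfl fun c _ => ?_
    rw [← Finset.mul_sum, ← Finset.mul_sum]
    ring
  have step3 : (∑ w, Q w * ∑ z, ∑ c : A → X, (∏ a, M (c a)) * (K (c w.1) z *
        (if G (c w.1) w.1 w.2 z then 0 else 1))) = bad Q M K T := by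
    rw [bad]
    refine Finset.sum_congr rfl fun w _ => ?_
    congr 1
    refine Finset.sum_congr rfl fun z _ => ?_
    exact exp_one (fun _ : A => M) (fun _ => hM) w.1
      (fun x => K x z * (if G x w.1 w.2 z then 0 else 1))
  have nP : ∀ z, 0 ≤ P z := fun z =>
    Finset.sum_nonneg fun x _ => mul_nonneg (hM.1 x) ((hK _).1 z)
  have step4 : ∀ (w : A × B) z u', ∑ c : A → X, (∏ a, M (c a)) * (K (c w.1) z *
        (if u' = w.1 then 0 else (if G (c u') u' w.2 z then 1 else 0))) ≤
      P z * ∑ y, M y * (if G y u' w.2 z then 1 else 0) := by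
    intro w z u'
    have nn : ∀ y, (0:ℝ) ≤ M y * (if G y u' w.2 z then 1 else 0) := fun y =>
      mul_nonneg (hM.1 y) (by split_ifs <;> norm_num)
    by_cases h : u' = w.1
    · simp only [if_pos h, mul_zero, Finset.sum_const_zero]
      exact mul_nonneg (nP z) (Finset.sum_nonneg fun y _ => nn y)
    · simp only [if_neg h]
      refine le_of_eq ?_
      rw [exp_two (fun _ : A => M) (fun _ => hM) w.1 u' (Ne.symm h) (fun x => K x z)
        (fun y => if G y u' w.2 z then 1 else 0)]
  have step5 : (∑ w, Q w * ∑ z, ∑ u', ∑ c : A → X, (∏ a, M (c a)) * (K (c w.1) z *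
        (if u' = w.1 then 0 else (if G (c u') u' w.2 z then 1 else 0)))) ≤ 1 / T := by
    have h1 : (∑ w, Q w * ∑ z, ∑ u', ∑ c : A → X, (∏ a, M (c a)) * (K (c w.1) z *
        (if u' = w.1 then 0 else (if G (c u') u' w.2 z then 1 else 0)))) ≤
        ∑ w : A × B, Q w * ∑ z, ∑ u', P z * ∑ y, M y * (if G y u' w.2 z then 1 else 0) :=
      Finset.sum_le_sum fun w _ => mul_le_mul_of_nonneg_left
        (Finset.sum_le_sum fun z _ => Finset.sum_le_sum fun u' _ => step4 w z u') (hQ.1 w)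
    refine h1.trans ?_
    rw [Fintype.sum_prod_type, Finset.sum_comm]
    have h2 : ∀ v, ∑ u, Q (u, v) * ∑ z, ∑ u', P z * ∑ y, M y * (if G y u' v z then 1 else 0) ≤
        ∑ u', ∑ y, ∑ z, M y * (Q (u', v) * K y z / T) := by
      intro v
      rw [← Finset.sum_mul, Finset.sum_comm]
      rw [Finset.mul_sum]
      refine Finset.sum_le_sum fun u' _ => ?_
      rw [Finset.mul_sum, Finset.sum_comm]
      refine Finset.sum_le_sum fun z _ => ?_
      rw [Finset.mul_sum, Finset.mul_sum]
      refine Finset.sum_le_sum fun y _ => ?_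
      have e : ∑ i, Q (i, v) = R v := rfl
      rw [e]
      have hq : 0 ≤ Q (u', v) * K y z := mul_nonneg (hQ.1 _) ((hK _).1 _)
      by_cases h : G y u' v z
      · rw [if_pos h]
        have h' : T * R v * P z < Q (u', v) * K y z := h
        have : R v * P z ≤ Q (u', v) * K y z / T := by
          rw [le_div_iff₀ hT]; linarith
        have := mul_le_mul_of_nonneg_left this (hM.1 y)
        linarith
      · rw [if_neg h]
        simp only [mul_zero]
        exact mul_nonneg (hM.1 y) (div_nonneg hq hT.le)
    refine (Finset.sum_le_sum fun v _ => h2 v).trans (le_of_eq ?_)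
    have h3 : ∀ v u' y, ∑ z, M y * (Q (u', v) * K y z / T) = Q (u', v) / T * M y := by
      intro v u' y
      have : ∀ z, M y * (Q (u', v) * K y z / T) = Q (u', v) / T * M y * K y z := fun z => by ring
      simp only [this, ← Finset.mul_sum, (hK y).2, mul_one]
    simp only [h3, ← Finset.mul_sum, hM.2, mul_one, ← Finset.sum_div]
    rw [Finset.sum_comm, ← Fintype.sum_prod_type', hQ.2]
  linarith

lemma avg_KC {A B X1 X2 Y Z : Type*} [Fintype A] [Fintype B] [Fintype X2] [Fintype Y]
    (Q : A × B → ℝ) (hQ : IsPMF Q) (M : X2 → ℝ) (hM : IsPMF M) (W : X1 → X2 → Y → ℝ) (o : Y → Z)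
    (x : X1) (z : Z) :
    ∑ c : A → X2, (∏ a, M (c a)) * KC (pr Q (fun w => c w.1)) W o x z = KC M W o x z := by
  have h : ∀ c : A → X2, KC (pr Q (fun w => c w.1)) W o x z =
      ∑ w, Q w * ∑ y, (if o y = z then W x (c w.1) y else 0) := fun c =>
    sum_pr_mul Q (fun w => c w.1) (fun b => ∑ y, if o y = z then W x b y else 0)
  simp only [h, Finset.mul_sum (s := (Finset.univ : Finset (A × B)))]
  rw [Finset.sum_comm]
  have h2 : ∀ w : A × B, ∑ c : A → X2, (∏ a, M (c a)) *
      (Q w * ∑ y, (if o y = z then W x (c w.1) y else 0)) = Q w * KC M W o x z := by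
    intro w
    rw [KC, ← exp_one (fun _ : A => M) (fun _ => hM) w.1
      (fun b => ∑ y, if o y = z then W x b y else 0), Finset.mul_sum]
    exact Finset.sum_congr rfl fun c _ => by ring
  simp only [h2, ← Finset.sum_mul, hQ.2, one_mul]

lemma avg_PE1 {A1 B1 A2 B2 X1 X2 Y Z : Type*} [Fintype A1] [Fintype B1] [Fintype A2]
    [Fintype B2] [Fintype Y] [Fintype X1] [Fintype X2] [Fintype Z]
    (Q1 : A1 × B1 → ℝ) (hQ1 : IsPMF Q1) (Q2 : A2 × B2 → ℝ) (hQ2 : IsPMF Q2)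
    (W : X1 → X2 → Y → ℝ) (hW : ∀ a b, IsPMF (W a b)) (o : Y → Z) (M1 : X1 → ℝ) (hM1 : IsPMF M1)
    (M2 : X2 → ℝ) (hM2 : IsPMF M2) (T : ℝ) (hT : 0 < T) :
    ∃ dec : (A1 → X1) → Z → B1 → A1,
      ∑ c1 : A1 → X1, ∑ c2 : A2 → X2, (∏ a, M1 (c1 a)) * (∏ a, M2 (c2 a)) *
        PE1 Q1 Q2 W o c1 c2 (dec c1) ≤ bad Q1 M1 (KC M2 W o) T + 1 / T := by
  obtain ⟨dec, hdec⟩ := single_user Q1 hQ1 M1 hM1 (KC M2 W o) (KC_pmf M2 W o hM2 hW) T hT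
  refine ⟨dec, le_trans (le_of_eq ?_) hdec⟩
  refine Finset.sum_congr rfl fun c1 _ => ?_
  simp only [mul_assoc, ← Finset.mul_sum]
  congr 1
  simp only [PE1_eq, ← avg_KC Q2 hQ2 M2 hM2 W o]
  simp only [Finset.mul_sum, Finset.sum_mul]
  rw [Finset.sum_comm]
  refine Finset.sum_congr rfl fun w _ => ?_
  rw [Finset.sum_comm]
  refine Finset.sum_congr rfl fun z _ => Finset.sum_congr rfl fun c2 _ => ?_
  ring

lemma exists_le_avg {Ω : Type*} [Fintype Ω] (p : Ω → ℝ) (hp : IsPMF p) (F : Ω → ℝ) (e : ℝ)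
    (h : ∑ ω, p ω * F ω ≤ e) : ∃ ω, F ω ≤ e := by
  by_contra hcon
  push Not at hcon
  have hne : ∃ ω, 0 < p ω := by
    by_contra hc
    push Not at hc
    have : ∑ ω, p ω ≤ 0 := Finset.sum_nonpos fun ω _ => hc ω
    rw [hp.2] at this
    linarith
  obtain ⟨ω0, h0⟩ := hne
  have : ∑ ω, p ω * e < ∑ ω, p ω * F ω :=
    Finset.sum_lt_sum (fun ω _ => mul_le_mul_of_nonneg_left (hcon ω).le (hp.1 ω))
      ⟨ω0, Finset.mem_univ _, mul_lt_mul_of_pos_left (hcon ω0) h0⟩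
  rw [← Finset.sum_mul, hp.2, one_mul] at this
  linarith

/-- One-shot achievability for the interference channel. -/
lemma one_shot_ach {A1 B1 A2 B2 X1 X2 Y Z1 Z2 : Type*} [Fintype A1] [Fintype B1] [Fintype A2]
    [Fintype B2] [Fintype Y] [Fintype X1] [Fintype X2] [Fintype Z1] [Fintype Z2]
    (Q1 : A1 × B1 → ℝ) (hQ1 : IsPMF Q1) (Q2 : A2 × B2 → ℝ) (hQ2 : IsPMF Q2)
    (W : X1 → X2 → Y → ℝ) (hW : ∀ a b, IsPMF (W a b)) (o1 : Y → Z1) (o2 : Y → Z2)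
    (M1 : X1 → ℝ) (hM1 : IsPMF M1) (M2 : X2 → ℝ) (hM2 : IsPMF M2) (T : ℝ) (hT : 0 < T) :
    ∃ (c1 : A1 → X1) (c2 : A2 → X2) (g1 : Z1 → B1 → A1) (g2 : Z2 → B2 → A2),
      PE1 Q1 Q2 W o1 c1 c2 g1 + PE1 Q2 Q1 (fun b a y => W a b y) o2 c2 c1 g2 ≤
        bad Q1 M1 (KC M2 W o1) T + 1 / T +
          (bad Q2 M2 (KC M1 (fun b a y => W a b y) o2) T + 1 / T) := by
  obtain ⟨d1, h1⟩ := avg_PE1 Q1 hQ1 Q2 hQ2 W hW o1 M1 hM1 M2 hM2 T hT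
  obtain ⟨d2, h2⟩ := avg_PE1 Q2 hQ2 Q1 hQ1 (fun b a y => W a b y) (fun b a => hW a b) o2
    M2 hM2 M1 hM1 T hT
  have p1 := isPMF_pi (fun _ : A1 => M1) (fun _ => hM1)
  have p2 := isPMF_pi (fun _ : A2 => M2) (fun _ => hM2)
  obtain ⟨⟨c1, c2⟩, hc⟩ := exists_le_avg
    (fun c : (A1 → X1) × (A2 → X2) => (∏ a, M1 (c.1 a)) * (∏ a, M2 (c.2 a)))
    ⟨fun c => mul_nonneg (p1.1 c.1) (p2.1 c.2), by
      rw [Fintype.sum_prod_type]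
      simp only [← Finset.mul_sum, p2.2, mul_one, p1.2]⟩
    (fun c => PE1 Q1 Q2 W o1 c.1 c.2 (d1 c.1) +
      PE1 Q2 Q1 (fun b a y => W a b y) o2 c.2 c.1 (d2 c.2))
    (bad Q1 M1 (KC M2 W o1) T + 1 / T +
      (bad Q2 M2 (KC M1 (fun b a y => W a b y) o2) T + 1 / T)) (by
      rw [Fintype.sum_prod_type]
      simp only [mul_add, Finset.sum_add_distrib]
      refine add_le_add h1 (le_trans (le_of_eq ?_) h2)
      rw [Finset.sum_comm]
      refine Finset.sum_congr rfl fun c2 _ => Finset.sum_congr rfl fun c1 _ => ?_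
      ring)
  exact ⟨c1, c2, d1 c1, d2 c2, hc⟩

end Helpers6

section Helpers7

lemma bad_small {U V X Z : Type} [Fintype U] [Fintype V] [Fintype X] [Fintype Z]
    (q : U × V → ℝ) (hq : IsPMF q) (M : X → ℝ) (hM : IsPMF M) (K : X → Z → ℝ)
    (hK : ∀ x, IsPMF (K x)) (n : ℕ) (hn : 0 < n) (hgap : n * HC q < MI M K)
    (T : ℝ) (hT : 0 < T) (η : ℝ) (hη : 0 < η) :
    ∃ N0 : ℕ, ∀ N ≥ N0, bad (iid q N) (fun x : Fin (N / n) → X => ∏ j, M (x j))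
      (fun x (z : Fin (N / n) → Z) => ∏ j, K (x j) (z j)) T ≤ η := by
  have hn' : (0:ℝ) < n := by exact_mod_cast hn
  set ε : ℝ := (MI M K - n * HC q) / (2 * (n + 1)) with hε
  have hεp : 0 < ε := div_pos (by linarith) (by positivity)
  have hH := HC_nonneg q hq
  set R : V → ℝ := fun v => ∑ a, q (a, v) with hR
  set P : Z → ℝ := fun z => ∑ x, M x * K x z with hP
  set f1 : U × V → ℝ := fun w => lg (q w) - lg (R w.2) with hf1
  set f2 : X × Z → ℝ := fun w => lg (K w.1 w.2) - lg (P w.2) with hf2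
  set p2 : X × Z → ℝ := fun w => M w.1 * K w.1 w.2 with hp2
  have hp2' : IsPMF p2 := ⟨fun w => mul_nonneg (hM.1 _) ((hK _).1 _), by
    rw [Fintype.sum_prod_type]
    simp only [hp2, ← Finset.mul_sum, (hK _).2, mul_one, hM.2]⟩
  have m1 : ∑ w, q w * f1 w = - HC q := by rw [HC, neg_neg]
  have m2 : ∑ w, p2 w * f2 w = MI M K := by rw [Fintype.sum_prod_type]; rfl
  obtain ⟨N1, h1⟩ := wlln q hq f1 ε (η / 2) hεp (by positivity)
  obtain ⟨N2, h2⟩ := wlln p2 hp2' f2 ε (η / 2) hεp (by positivity)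
  rw [m1] at h1
  rw [m2] at h2
  obtain ⟨N3, h3⟩ := exists_nat_ge ((lg T + n * (HC q + ε)) / ((MI M K - n * HC q) / 2))
  refine ⟨max N1 (n * max N2 N3), fun N hN => ?_⟩
  have hN1 : N1 ≤ N := le_trans (le_max_left _ _) hN
  have hNm : max N2 N3 ≤ N / n := by
    rw [Nat.le_div_iff_mul_le hn, mul_comm]
    exact le_trans (le_max_right _ _) hN
  have hdm : N < N / n * n + n := by
    have := Nat.div_add_mod' N n
    have := Nat.mod_lt N hn
    omega
  have hdm' : (N:ℝ) ≤ (N / n : ℕ) * n + n := by exact_mod_cast hdm.le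
  generalize N / n = m at hNm hdm hdm' ⊢
  have hm2 : N2 ≤ m := le_trans (le_max_left _ _) hNm
  have hm3 : N3 ≤ m := le_trans (le_max_right _ _) hNm
  have hm3' : (N3:ℝ) ≤ m := by exact_mod_cast hm3
  have hlgT : lg T ≤ m * (MI M K - ε) + N * (-HC q - ε) := by
    have a1 := h3.trans hm3'
    rw [div_le_iff₀ (by linarith)] at a1
    have a2 : (n + 1) * ε = (MI M K - n * HC q) / 2 := by
      rw [hε]; field_simp
    have a3 := mul_le_mul_of_nonneg_right hdm' (by positivity : 0 ≤ HC q + ε)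
    have a4 : (m:ℝ) * ((n + 1) * ε) = m * ((MI M K - n * HC q) / 2) := by rw [a2]
    nlinarith
  have b1 := h1 N hN1
  have b2 := h2 m hm2
  rw [sum_pair_pi] at b1 b2
  rw [← Fintype.sum_prod_type'] at b1
  have hMm := isPMF_pi (fun _ : Fin m => M) (fun _ => hM)
  have hKm : ∀ x : Fin m → X, IsPMF (fun z : Fin m → Z => ∏ j, K (x j) (z j)) := fun x =>
    isPMF_pi (fun j => K (x j)) (fun j => hK _)
  have hQ := iid_pmf q hq N
  have key : ∀ (w : (Fin N → U) × (Fin N → V)) (z : Fin m → Z) (x : Fin m → X),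
      iid q N w * ((∏ j, M (x j)) * ((∏ j, K (x j) (z j)) *
      (if T * (∑ a, iid q N (a, w.2)) * (∑ x' : Fin m → X, (∏ j, M (x' j)) * (∏ j, K (x' j) (z j))) <
        iid q N w * (∏ j, K (x j) (z j)) then 0 else 1))) ≤
      iid q N w * (if ∑ i, f1 (w.1 i, w.2 i) ≤ N * (-HC q - ε) then 1 else 0) *
        ((∏ j, M (x j)) * (∏ j, K (x j) (z j))) +
      iid q N w * ((∏ j, p2 (x j, z j)) *
        (if ∑ j, f2 (x j, z j) ≤ m * (MI M K - ε) then 1 else 0)) := by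
    intro w z x
    have hp2p : ∏ j, p2 (x j, z j) = (∏ j, M (x j)) * (∏ j, K (x j) (z j)) := by
      rw [← Finset.prod_mul_distrib]
    rw [hp2p]
    have n1 := hQ.1 w
    have n2 := hMm.1 x
    have n3 := (hKm x).1 z
    have hi : ∀ (p : Prop), (0:ℝ) ≤ (if p then 1 else 0) := fun p => by split_ifs <;> norm_num
    have hrn : 0 ≤ iid q N w * (if ∑ i, f1 (w.1 i, w.2 i) ≤ N * (-HC q - ε) then 1 else 0) *
        ((∏ j, M (x j)) * (∏ j, K (x j) (z j))) := mul_nonneg (mul_nonneg n1 (hi _)) (mul_nonneg n2 n3)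
    have hrn' : 0 ≤ iid q N w * (((∏ j, M (x j)) * (∏ j, K (x j) (z j))) *
        (if ∑ j, f2 (x j, z j) ≤ m * (MI M K - ε) then 1 else 0)) :=
      mul_nonneg n1 (mul_nonneg (mul_nonneg n2 n3) (hi _))
    by_cases hg : T * (∑ a, iid q N (a, w.2)) *
        (∑ x' : Fin m → X, (∏ j, M (x' j)) * (∏ j, K (x' j) (z j))) <
        iid q N w * (∏ j, K (x j) (z j))
    · rw [if_pos hg]
      simp only [mul_zero]
      exact add_nonneg hrn hrn'
    rw [if_neg hg]
    by_cases hz : iid q N w * ((∏ j, M (x j)) * (∏ j, K (x j) (z j))) = 0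
    · rw [mul_one, hz]
      exact add_nonneg hrn hrn'
    by_cases c1 : ∑ i, f1 (w.1 i, w.2 i) ≤ N * (-HC q - ε)
    · rw [if_pos c1] at hrn ⊢
      linarith
    by_cases c2 : ∑ j, f2 (x j, z j) ≤ m * (MI M K - ε)
    · rw [if_pos c2] at hrn' ⊢
      linarith
    exfalso
    apply hg
    have z1 : iid q N w ≠ 0 := left_ne_zero_of_mul hz
    have z2 := left_ne_zero_of_mul (right_ne_zero_of_mul hz)
    have z3 := right_ne_zero_of_mul (right_ne_zero_of_mul hz)
    have q0 : ∀ i, 0 < q (w.1 i, w.2 i) := fun i =>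
      lt_of_le_of_ne (hq.1 _) (Finset.prod_ne_zero_iff.1 z1 i (Finset.mem_univ i)).symm
    have M0 : ∀ j, 0 < M (x j) := fun j =>
      lt_of_le_of_ne (hM.1 _) (Finset.prod_ne_zero_iff.1 z2 j (Finset.mem_univ j)).symm
    have K0 : ∀ j, 0 < K (x j) (z j) := fun j =>
      lt_of_le_of_ne ((hK _).1 _) (Finset.prod_ne_zero_iff.1 z3 j (Finset.mem_univ j)).symm
    have R0 : ∀ i, 0 < R (w.2 i) := fun i => lt_of_lt_of_le (q0 i)
      (Finset.single_le_sum (f := fun a => q (a, w.2 i)) (fun a _ => hq.1 _) (Finset.mem_univ _))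
    have P0 : ∀ j, 0 < P (z j) := fun j => lt_of_lt_of_le (mul_pos (M0 j) (K0 j))
      (Finset.single_le_sum (f := fun a => M a * K a (z j))
        (fun a _ => mul_nonneg (hM.1 _) ((hK _).1 _)) (Finset.mem_univ _))
    have eR : ∑ a, iid q N (a, w.2) = ∏ i, R (w.2 i) :=
      sum_pi_prod (fun i a => q (a, w.2 i))
    have eP : (∑ x' : Fin m → X, (∏ j, M (x' j)) * (∏ j, K (x' j) (z j))) = ∏ j, P (z j) := by
      rw [hP, ← sum_pi_prod (fun j x' => M x' * K x' (z j))]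
      exact Finset.sum_congr rfl fun a _ => by rw [Finset.prod_mul_distrib]
    have pR : 0 < ∏ i, R (w.2 i) := Finset.prod_pos fun i _ => R0 i
    have pP : 0 < ∏ j, P (z j) := Finset.prod_pos fun i _ => P0 i
    have pq : 0 < ∏ i, q (w.1 i, w.2 i) := Finset.prod_pos fun i _ => q0 i
    have pK : 0 < ∏ j, K (x j) (z j) := Finset.prod_pos fun i _ => K0 i
    rw [eR, eP]
    refine (Real.logb_lt_logb_iff (b := 2) (by norm_num) (mul_pos (mul_pos hT pR) pP)
      (mul_pos pq pK)).1 ?_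
    change lg _ < lg _
    rw [lg_mul (mul_pos hT pR).ne' pP.ne', lg_mul hT.ne' pR.ne', lg_mul pq.ne' pK.ne',
      lg_prod _ (fun i => (R0 i).ne'), lg_prod _ (fun i => (P0 i).ne'),
      lg_prod _ (fun i => (q0 i).ne'), lg_prod _ (fun i => (K0 i).ne')]
    push Not at c1 c2
    simp only [hf1, hf2, Finset.sum_sub_distrib] at c1 c2
    linarith
  have tot : bad (iid q N) (fun x : Fin m → X => ∏ j, M (x j))
      (fun x (z : Fin m → Z) => ∏ j, K (x j) (z j)) T ≤
      ∑ w, ∑ z : Fin m → Z, ∑ x : Fin m → X,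
      (iid q N w * (if ∑ i, f1 (w.1 i, w.2 i) ≤ N * (-HC q - ε) then 1 else 0) *
        ((∏ j, M (x j)) * (∏ j, K (x j) (z j))) +
      iid q N w * ((∏ j, p2 (x j, z j)) *
        (if ∑ j, f2 (x j, z j) ≤ m * (MI M K - ε) then 1 else 0))) := by
    rw [bad]
    simp only [Finset.mul_sum (s := (Finset.univ : Finset (Fin m → Z)))]
    refine Finset.sum_le_sum fun w _ => Finset.sum_le_sum fun z _ => ?_
    rw [Finset.mul_sum (s := (Finset.univ : Finset (Fin m → X)))]
    exact Finset.sum_le_sum fun x _ => key w z x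
  refine tot.trans ?_
  simp only [Finset.sum_add_distrib]
  have e1 : ∑ z : Fin m → Z, ∑ x : Fin m → X, (∏ j, M (x j)) * (∏ j, K (x j) (z j)) = 1 := by
    rw [Finset.sum_comm]
    simp only [← Finset.mul_sum, (hKm _).2, mul_one]
    exact hMm.2
  simp only [← Finset.mul_sum, e1, mul_one]
  rw [← Finset.sum_mul, hQ.2, one_mul, Finset.sum_comm (γ := Fin m → Z)]
  linarith

lemma ext_sum {κ ι τ ρ A B Y : Type*} [Fintype κ] [Fintype ι] [Fintype τ] [Fintype ρ] [Fintype Y]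
    [DecidableEq κ] [DecidableEq ι] [DecidableEq τ] [DecidableEq ρ]
    (e : κ ≃ (ι × τ) ⊕ ρ) (w : A → B → Y → ℝ) (hw : ∀ a b, IsPMF (w a b)) (x : ι → τ → A)
    (x' : ι → τ → B) (a0 : A) (b0 : B) (F : (ι → τ → Y) → ℝ) :
    ∑ y : κ → Y, WP w (fun k => Sum.elim (fun p : ι × τ => x p.1 p.2) (fun _ => a0) (e k))
      (fun k => Sum.elim (fun p : ι × τ => x' p.1 p.2) (fun _ => b0) (e k)) y *
      F (fun j i => y (e.symm (Sum.inl (j, i)))) = ∑ y : ι → τ → Y, WP (WP w) x x' y * F y := by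
  let E : (κ → Y) ≃ (ι → τ → Y) × (ρ → Y) :=
    ((Equiv.arrowCongr e (Equiv.refl Y)).trans (Equiv.sumArrowEquivProdArrow (ι × τ) ρ Y)).trans
      (Equiv.prodCongr (Equiv.curry ι τ Y) (Equiv.refl _))
  rw [Fintype.sum_equiv E _ (fun y => WP (WP w) x x' y.1 * F y.1 * ∏ i, w a0 b0 (y.2 i))]
  · rw [Fintype.sum_prod_type]
    have hone := (isPMF_pi (fun _ : ρ => w a0 b0) (fun _ => hw _ _)).2
    simp only [← Finset.mul_sum, hone, mul_one]
  · intro y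
    have : WP w (fun k => Sum.elim (fun p : ι × τ => x p.1 p.2) (fun _ => a0) (e k))
      (fun k => Sum.elim (fun p : ι × τ => x' p.1 p.2) (fun _ => b0) (e k)) y =
      WP (WP w) x x' (E y).1 * ∏ i, w a0 b0 ((E y).2 i) := by
      simp only [WP]
      rw [← Equiv.prod_comp e.symm, Fintype.prod_sum_type, Fintype.prod_prod_type]
      simp
      rfl
    rw [this]
    have h2 : (fun j i => y (e.symm (Sum.inl (j, i)))) = (E y).1 := rfl
    rw [h2]
    ring

lemma PE1_ext {κ ι τ ρ A1 B1 A2 B2 X1 X2 Y Z : Type*} [Fintype κ] [Fintype ι] [Fintype τ]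
    [Fintype ρ] [Fintype Y] [DecidableEq κ] [DecidableEq ι] [DecidableEq τ] [DecidableEq ρ]
    [Fintype A1] [Fintype B1] [Fintype A2] [Fintype B2]
    (e : κ ≃ (ι × τ) ⊕ ρ) (w : X1 → X2 → Y → ℝ) (hw : ∀ a b, IsPMF (w a b)) (o : Y → Z)
    (Q1 : A1 × B1 → ℝ) (Q2 : A2 × B2 → ℝ) (c1 : A1 → ι → τ → X1) (c2 : A2 → ι → τ → X2)
    (g : (ι → τ → Z) → B1 → A1) (a0 : X1) (b0 : X2) :
    PE1 Q1 Q2 (WP w) (fun (y : κ → Y) k => o (y k))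
      (fun u k => Sum.elim (fun p : ι × τ => c1 u p.1 p.2) (fun _ => a0) (e k))
      (fun u k => Sum.elim (fun p : ι × τ => c2 u p.1 p.2) (fun _ => b0) (e k))
      (fun z v => g (fun j i => z (e.symm (Sum.inl (j, i)))) v) =
    PE1 Q1 Q2 (WP (WP w)) (fun y j i => o (y j i)) c1 c2 g := by
  rw [PE1, PE1]
  refine Finset.sum_congr rfl fun w1 _ => Finset.sum_congr rfl fun w2 _ => ?_
  have := ext_sum e w hw (c1 w1.1) (c2 w2.1) a0 b0
    (fun y => if g (fun j i => o (y j i)) w1.2 = w1.1 then 0 else 1)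
  simp only [mul_assoc, ← Finset.mul_sum]
  rw [this]

end Helpers7

section Helpers8

variable {U1 V1 U2 V2 X1 X2 Y1 Y2 : Type}
  [Fintype U1] [Fintype V1] [Fintype U2] [Fintype V2]
  [Fintype X1] [Fintype X2] [Fintype Y1] [Fintype Y2]

lemma pmf_nonempty {α : Type*} [Fintype α] (p : α → ℝ) (hp : IsPMF p) : Nonempty α := by
  by_contra hcon
  rw [not_nonempty_iff] at hcon
  have := hp.2
  simp at this

lemma PerrOwn_nonneg (ch : X1 × X2 → Y1 × Y2 → ℝ) (hch : IsKernel ch)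
    (q1 : U1 × V1 → ℝ) (q2 : U2 × V2 → ℝ) (hq1 : IsPMF q1) (hq2 : IsPMF q2) (n : ℕ)
    (f1 : (Fin n → U1) → Fin n → X1) (f2 : (Fin n → U2) → Fin n → X2)
    (g1 : (Fin n → Y1) → (Fin n → V1) → Fin n → U1)
    (g2 : (Fin n → Y2) → (Fin n → V2) → Fin n → U2) :
    0 ≤ PerrOwn ch q1 q2 n f1 f2 g1 g2 := by
  rw [PerrOwn_eq]
  refine Finset.sum_nonneg fun w1 _ => Finset.sum_nonneg fun w2 _ => Finset.sum_nonneg fun y _ => ?_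
  refine mul_nonneg (mul_nonneg (mul_nonneg ((iid_pmf q1 hq1 n).1 _)
    ((iid_pmf q2 hq2 n).1 _)) ((WP_pmf _ (cur_pmf hch) _ _).1 _)) ?_
  split_ifs <;> norm_num

lemma PerrOwn_le (ch : X1 × X2 → Y1 × Y2 → ℝ) (hch : IsKernel ch)
    (q1 : U1 × V1 → ℝ) (q2 : U2 × V2 → ℝ) (hq1 : IsPMF q1) (hq2 : IsPMF q2) (n : ℕ)
    (f1 : (Fin n → U1) → Fin n → X1) (f2 : (Fin n → U2) → Fin n → X2)
    (g1 : (Fin n → Y1) → (Fin n → V1) → Fin n → U1)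
    (g2 : (Fin n → Y2) → (Fin n → V2) → Fin n → U2) :
    PerrOwn ch q1 q2 n f1 f2 g1 g2 ≤
    PE1 (iid q1 n) (iid q2 n) (WP (cur ch)) (fun y i => (y i).1) f1 f2 g1 +
    PE1 (iid q2 n) (iid q1 n) (WP (fun b a y => cur ch a b y)) (fun y i => (y i).2) f2 f1 g2 := by
  rw [PerrOwn_eq, PE1, PE1, Finset.sum_comm (s := (Finset.univ : Finset ((Fin n → U2) × (Fin n → V2)))),
    ← Finset.sum_add_distrib]
  refine Finset.sum_le_sum fun w1 _ => ?_
  rw [← Finset.sum_add_distrib]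
  refine Finset.sum_le_sum fun w2 _ => ?_
  rw [← Finset.sum_add_distrib]
  refine Finset.sum_le_sum fun y _ => ?_
  rw [mul_comm (iid q2 n w2)]
  have h0 : 0 ≤ iid q1 n w1 * iid q2 n w2 * WP (cur ch) (f1 w1.1) (f2 w2.1) y :=
    mul_nonneg (mul_nonneg ((iid_pmf q1 hq1 n).1 _)
    ((iid_pmf q2 hq2 n).1 _)) ((WP_pmf _ (cur_pmf hch) _ _).1 _)
  change _ ≤ _ + iid q1 n w1 * iid q2 n w2 * WP (cur ch) (f1 w1.1) (f2 w2.1) y * _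
  rw [← mul_add]
  refine mul_le_mul_of_nonneg_left ?_ h0
  by_cases h1 : g1 (fun i => (y i).1) w1.2 = w1.1
  · by_cases h2 : g2 (fun i => (y i).2) w2.2 = w2.1
    · rw [if_pos ⟨h1, h2⟩, if_pos h1, if_pos h2]; norm_num
    · rw [if_neg (fun hh => h2 hh.2), if_pos h1, if_neg h2]; norm_num
  · rw [if_neg (fun hh => h1 hh.1), if_neg h1]
    split_ifs <;> norm_num

lemma exists_split (N n : ℕ) : Nonempty (Fin N ≃ (Fin (N / n) × Fin n) ⊕ Fin (N % n)) := by
  refine ⟨((Equiv.sumCongr finProdFinEquiv (Equiv.refl _)).trans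
    (finSumFinEquiv.trans (finCongr (Nat.div_add_mod' N n)))).symm⟩

lemma ach_eventually (ch : X1 × X2 → Y1 × Y2 → ℝ) (hch : IsKernel ch)
    (q1 : U1 × V1 → ℝ) (q2 : U2 × V2 → ℝ) (hq1 : IsPMF q1) (hq2 : IsPMF q2)
    (n : ℕ) (hn : 0 < n) (μ1 : (Fin n → X1) → ℝ) (μ2 : (Fin n → X2) → ℝ) (hμ1 : IsPMF μ1)
    (hμ2 : IsPMF μ2)
    (h1 : n * HC q1 < MI μ1 (KC μ2 (WP (cur ch)) (fun y i => (y i).1)))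
    (h2 : n * HC q2 < MI μ2 (KC μ1 (WP (fun b a y => cur ch a b y)) (fun y i => (y i).2)))
    (η : ℝ) (hη : 0 < η) :
    ∃ N0 : ℕ, ∀ N ≥ N0, ∃ (f1 : (Fin N → U1) → Fin N → X1) (f2 : (Fin N → U2) → Fin N → X2)
    (g1 : (Fin N → Y1) → (Fin N → V1) → Fin N → U1)
    (g2 : (Fin N → Y2) → (Fin N → V2) → Fin N → U2), PerrOwn ch q1 q2 N f1 f2 g1 g2 ≤ η := by
  have hW := cur_pmf hch
  have hη4 : 0 < η / 4 := by positivity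
  have hT : 0 < 1 / (η / 4) := by positivity
  obtain ⟨x1⟩ := pmf_nonempty μ1 hμ1
  obtain ⟨x2⟩ := pmf_nonempty μ2 hμ2
  obtain ⟨N1, b1⟩ := bad_small q1 hq1 μ1 hμ1 _
    (KC_pmf μ2 (WP (cur ch)) (fun y i => (y i).1) hμ2 (WP_pmf _ hW)) n hn h1 _ hT _ hη4
  obtain ⟨N2, b2⟩ := bad_small q2 hq2 μ2 hμ2 _
    (KC_pmf μ1 (WP (fun b a y => cur ch a b y)) (fun y i => (y i).2) hμ1
      (WP_pmf _ (fun b a => hW a b))) n hn h2 _ hT _ hη4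
  refine ⟨max N1 N2, fun N hN => ?_⟩
  have b1' := b1 N (le_trans (le_max_left _ _) hN)
  have b2' := b2 N (le_trans (le_max_right _ _) hN)
  obtain ⟨e⟩ := exists_split N n
  obtain ⟨c1, c2, g1, g2, hc⟩ := one_shot_ach (iid q1 N) (iid_pmf q1 hq1 N) (iid q2 N)
    (iid_pmf q2 hq2 N) (WP (ι := Fin (N / n)) (WP (ι := Fin n) (cur ch)))
    (WP_pmf _ (WP_pmf _ hW)) (fun y j i => (y j i).1) (fun y j i => (y j i).2)
    (fun x => ∏ j, μ1 (x j)) (isPMF_pi (fun _ => μ1) (fun _ => hμ1))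
    (fun x => ∏ j, μ2 (x j)) (isPMF_pi (fun _ => μ2) (fun _ => hμ2)) _ hT
  have k1 : (KC (fun x : Fin (N / n) → Fin n → X2 => ∏ j, μ2 (x j))
      (WP (ι := Fin (N / n)) (WP (ι := Fin n) (cur ch))) (fun y j i => (y j i).1)) =
      fun x z => ∏ j, KC μ2 (WP (cur ch)) (fun y i => (y i).1) (x j) (z j) := by
    funext x z
    exact KC_prod (fun _ => μ2) (WP (cur ch)) (fun y i => (y i).1) x z
  have k2 : (KC (fun x : Fin (N / n) → Fin n → X1 => ∏ j, μ1 (x j))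
      (fun b a y => WP (ι := Fin (N / n)) (WP (ι := Fin n) (cur ch)) a b y)
        (fun y j i => (y j i).2)) =
      fun x z => ∏ j, KC μ1 (WP (fun b a y => cur ch a b y)) (fun y i => (y i).2) (x j) (z j) := by
    funext x z
    exact KC_prod (fun _ => μ1) (WP (fun b a y => cur ch a b y)) (fun y i => (y i).2) x z
  rw [k1, k2] at hc
  refine ⟨_, _, _, _, (PerrOwn_le ch hch q1 q2 hq1 hq2 N
    (fun u k => Sum.elim (fun p : Fin (N / n) × Fin n => c1 u p.1 p.2) (fun _ => x1 ⟨0, hn⟩) (e k))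
    (fun u k => Sum.elim (fun p : Fin (N / n) × Fin n => c2 u p.1 p.2) (fun _ => x2 ⟨0, hn⟩) (e k))
    (fun z v => g1 (fun j i => z (e.symm (Sum.inl (j, i)))) v)
    (fun z v => g2 (fun j i => z (e.symm (Sum.inl (j, i)))) v)).trans ?_⟩
  rw [PE1_ext e (cur ch) hW Prod.fst (iid q1 N) (iid q2 N) c1 c2 g1,
    PE1_ext e (fun b a y => cur ch a b y) (fun b a => hW a b) Prod.snd (iid q2 N) (iid q1 N) c2 c1 g2]
  refine hc.trans ?_
  rw [one_div_one_div]
  linarith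

lemma achievability (ch : X1 × X2 → Y1 × Y2 → ℝ) (hch : IsKernel ch)
    (q1 : U1 × V1 → ℝ) (q2 : U2 × V2 → ℝ) (hq1 : IsPMF q1) (hq2 : IsPMF q2)
    (h : (HC q1, HC q2) ∈ interior (capIC ch)) : ReliableOwn ch q1 q2 := by
  rw [mem_interior_iff_mem_nhds, Metric.mem_nhds_iff] at h
  obtain ⟨r, hr, hball⟩ := h
  have hmem : (HC q1 + r / 2, HC q2 + r / 2) ∈ capIC ch := by
    apply hball
    rw [Metric.mem_ball, Prod.dist_eq, Real.dist_eq, Real.dist_eq]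
    simp only [add_sub_cancel_left, max_self]
    rw [abs_of_pos (by positivity)]
    linarith
  rw [capIC, Metric.mem_closure_iff] at hmem
  obtain ⟨s, hs, hd⟩ := hmem (r / 2) (by positivity)
  rw [Set.mem_iUnion] at hs
  obtain ⟨n0, hs⟩ := hs
  rw [En_iff ch hch] at hs
  obtain ⟨_, ⟨μ1, μ2, hμ1, hμ2, rfl⟩, rfl⟩ := hs
  have hn : (0:ℝ) < ((n0 + 1 : ℕ) : ℝ) := by positivity
  rw [Prod.dist_eq, max_lt_iff, Real.dist_eq, Real.dist_eq, abs_lt, abs_lt] at hd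
  simp only [Prod.smul_mk, smul_eq_mul] at hd
  have e1 : ((n0 + 1 : ℕ) : ℝ) * HC q1 < MI μ1 (KC μ2 (WP (cur ch)) (fun y i => (y i).1)) := by
    have h1 := hd.1.2
    have : HC q1 < 1 / ((n0 + 1 : ℕ) : ℝ) * MI μ1 (KC μ2 (WP (cur ch)) (fun y i => (y i).1)) := by
      linarith
    rw [one_div, inv_mul_eq_div, lt_div_iff₀ hn] at this
    linarith
  have e2 : ((n0 + 1 : ℕ) : ℝ) * HC q2 <
      MI μ2 (KC μ1 (WP (fun b a y => cur ch a b y)) (fun y i => (y i).2)) := by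
    have h1 := hd.2.2
    have : HC q2 < 1 / ((n0 + 1 : ℕ) : ℝ) *
      MI μ2 (KC μ1 (WP (fun b a y => cur ch a b y)) (fun y i => (y i).2)) := by
      linarith
    rw [one_div, inv_mul_eq_div, lt_div_iff₀ hn] at this
    linarith
  have ev := ach_eventually ch hch q1 q2 hq1 hq2 (n0 + 1) (Nat.succ_pos _) μ1 μ2 hμ1 hμ2 e1 e2
  obtain ⟨x1⟩ := pmf_nonempty μ1 hμ1
  obtain ⟨x2⟩ := pmf_nonempty μ2 hμ2
  have i1 : Nonempty X1 := ⟨x1 0⟩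
  have i2 : Nonempty X2 := ⟨x2 0⟩
  have i3 : Nonempty U1 := (pmf_nonempty q1 hq1).map Prod.fst
  have i4 : Nonempty U2 := (pmf_nonempty q2 hq2).map Prod.fst
  have best := fun N : ℕ =>
    Finite.exists_min (fun c : ((Fin N → U1) → Fin N → X1) × ((Fin N → U2) → Fin N → X2) ×
      ((Fin N → Y1) → (Fin N → V1) → Fin N → U1) × ((Fin N → Y2) → (Fin N → V2) → Fin N → U2) =>
      PerrOwn ch q1 q2 N c.1 c.2.1 c.2.2.1 c.2.2.2)
  choose c hc using best
  refine ⟨fun N => (c N).1, fun N => (c N).2.1, fun N => (c N).2.2.1, fun N => (c N).2.2.2, ?_⟩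
  rw [Metric.tendsto_atTop]
  intro ε hε
  obtain ⟨N0, h0⟩ := ev (ε / 2) (by positivity)
  refine ⟨N0, fun N hN => ?_⟩
  obtain ⟨f1, f2, g1, g2, hle⟩ := h0 N hN
  have := hc N (f1, f2, g1, g2)
  rw [Real.dist_eq, sub_zero, abs_of_nonneg (PerrOwn_nonneg ch hch q1 q2 hq1 hq2 N _ _ _ _)]
  have h3 := this.trans hle
  linarith

end Helpers8

section Stmt0

variable {U1 V1 U2 V2 X1 X2 Y1 Y2 : Type}
  [Fintype U1] [Fintype V1] [Fintype U2] [Fintype V2]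
  [Fintype X1] [Fintype X2] [Fintype Y1] [Fintype Y2]

theorem stmt0 (ch : X1 × X2 → Y1 × Y2 → ℝ) (q1 : U1 × V1 → ℝ) (q2 : U2 × V2 → ℝ)
    (hch : IsKernel ch) (hq1 : IsPMF q1) (hq2 : IsPMF q2) :
    (((condEnt q1 Prod.fst Prod.snd, condEnt q2 Prod.fst Prod.snd) : ℝ × ℝ) ∈
        interior (capIC ch) → ReliableOwn ch q1 q2) ∧
    (((condEnt q1 Prod.fst Prod.snd, condEnt q2 Prod.fst Prod.snd) : ℝ × ℝ) ∉ capIC ch →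
        ¬ ReliableOwn ch q1 q2) := by
  rw [condEnt_eq, condEnt_eq]
  exact ⟨fun h => achievability ch hch q1 q2 hq1 hq2 h,
    fun h hr => h (converse ch hch q1 q2 hq1 hq2 hr)⟩

end Stmt0

end Paper
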